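/- Let K be a finite n-dimensional simplicial complex embedded in Euclidean space, where n is an odd integer with n ≥ 3. Suppose that χ(link(η^i, K)) = 2 for every i-simplex η^i of K, for every even integer i with 0 ≤ i ≤ n−1 (here χ denotes the combinatorial Euler characteristic Σ_k (−1)^k f_k). Then the ascending stratified curvature K_a(τ) = 0 for every simplex τ of K. -/

import Mathlib

open Filter MeasureTheory Geometry
open scoped BigOperators

noncomputable section

attribute [local instance 0] Classical.propDecidable

namespace AngleDefectPaper

/-- `N`-dimensional Euclidean space. -/
abbrev Euc (N : ℕ) : Type := EuclideanSpace ℝ (Fin N)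

variable {N : ℕ}

/-- The open simplex determined by a finite set of points: the intrinsic
(relative) interior of its convex hull. -/
def openSimplex (s : Finset (Euc N)) : Set (Euc N) :=
  intrinsicInterior ℝ (convexHull ℝ (s : Set (Euc N)))

/-- The normalized solid angle `α(η, σ)` of the simplex `σ` along its face `η`:
the fraction of a small sphere (in the affine span of `σ`) centered at a point of
the open face `η` that lies in `σ`, normalized so that the full sphere has
measure `1`.  It is computed as the limiting fraction of a small ambient ball
centered at the centroid of `η` that lies in the cylinder obtained by thickening
`σ` in the directions orthogonal to its affine span. -/
def solidAngle (η σ : Finset (Euc N)) : ℝ :=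
  limUnder (nhdsWithin (0 : ℝ) (Set.Ioi 0)) fun ε =>
    (volume (Metric.ball (η.centroid ℝ id) ε ∩
      {y : Euc N | ∃ c ∈ convexHull ℝ (σ : Set (Euc N)),
        ∃ w ∈ (vectorSpan ℝ (σ : Set (Euc N)))ᗮ, y = c + w})).toReal /
    (volume (Metric.ball (η.centroid ℝ id) ε)).toReal

/-- `Tcone r` is (a realization in the plane of) the open cone on `r` points:
`r` half-open segments emanating from the origin in pairwise distinct
directions, glued at the origin.  For `r = 0` it is a single point. -/
def Tcone (r : ℕ) : Set (ℝ × ℝ) :=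
  {0} ∪ ⋃ k ∈ Finset.range r,
    {p : ℝ × ℝ | ∃ t : ℝ, 0 ≤ t ∧ t < 1 ∧ p = t • ((1 : ℝ), (k : ℝ))}

/-- `x` has a neighborhood in `S` homeomorphic to `T_r × ℝ^{n-1}`, with the
homeomorphism taking `x` into the apex set `{cone point} × ℝ^{n-1}`. -/
def HasConeNbhd (n r : ℕ) (S : Set (Euc N)) (x : Euc N) : Prop :=
  ∃ U : Set (Euc N), U ∈ nhdsWithin x S ∧ U ⊆ S ∧
    ∃ h : U ≃ₜ (Tcone r) × EuclideanSpace ℝ (Fin (n - 1)),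
      ∀ hx : x ∈ U, ((h ⟨x, hx⟩).1 : ℝ × ℝ) = 0

/-- The set of points of `|K|` having a neighborhood of cone type `r`. -/
def csetAux (n : ℕ) (K : SimplicialComplex ℝ (Euc N)) (r : ℕ) : Set (Euc N) :=
  {x | x ∈ K.space ∧ HasConeNbhd n r K.space x}

/-- The sets `C_r(K)`: for `r ≠ 2` the points with a cone-type-`r` neighborhood,
and `C_2(K)` is the complement in `|K|` of the union of the others. -/
def cset (n : ℕ) (K : SimplicialComplex ℝ (Euc N)) (r : ℕ) : Set (Euc N) :=
  if r = 2 then K.space \ ⋃ r' ∈ {r' : ℕ | r' ≠ 2}, csetAux n K r'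
  else csetAux n K r

/-- The stratification rank `r(η) = r/2`, where `C_r(K)` is the (unique) set of
the stratification containing the open simplex of `η`. -/
def strRank (n : ℕ) (K : SimplicialComplex ℝ (Euc N)) (η : Finset (Euc N)) : ℝ :=
  if h : ∃ r : ℕ, r ≠ 2 ∧ openSimplex η ⊆ csetAux n K r then (h.choose : ℝ) / 2
  else 1

/-- The set of `n`-simplices of `K` having `η` as a face. -/
def nSimplicesOn (n : ℕ) (K : SimplicialComplex ℝ (Euc N)) (η : Finset (Euc N)) :
    Set (Finset (Euc N)) :=
  {σ | σ ∈ K.faces ∧ σ.card = n + 1 ∧ η ⊆ σ}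

/-- The generalized angle defect `D(η) = r(η) - Σ_{σⁿ ≻ η} α(η, σⁿ)`. -/
def defect (n : ℕ) (K : SimplicialComplex ℝ (Euc N)) (η : Finset (Euc N)) : ℝ :=
  strRank n K η - ∑ᶠ σ ∈ nSimplicesOn n K η, solidAngle η σ

/-- The angle defect sequence `a_m = 4 B_{m+2} (2^{m+2} - 1)/(m+2)`, where `B_k`
is the `k`-th Bernoulli number (with the convention `B_1 = -1/2`). -/
def ads (m : ℕ) : ℚ :=
  4 * bernoulli (m + 2) * (2 ^ (m + 2) - 1) / (m + 2)

/-- The ascending stratified curvature of a simplex `τ` (of dimension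
`p = τ.card - 1`) in the `n`-dimensional complex `K`. -/
def asc (n : ℕ) (K : SimplicialComplex ℝ (Euc N)) (τ : Finset (Euc N)) : ℝ :=
  (ads (τ.card - 1) : ℝ) * defect n K τ +
    (ads (τ.card - 1) : ℝ) / 2 *
      ∑ i ∈ Finset.Icc τ.card n,
        (-1 : ℝ) ^ (i - (τ.card - 1)) *
          ∑ᶠ η ∈ {η : Finset (Euc N) | η ∈ K.faces ∧ η.card = i + 1 ∧ τ ⊆ η},
            defect n K η

/-- The stratified Euler characteristic `χˢ(K) = Σ_{η ∈ K} r(η) (-1)^{dim η}`. -/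
def stratEuler (n : ℕ) (K : SimplicialComplex ℝ (Euc N)) : ℝ :=
  ∑ᶠ η ∈ K.faces, strRank n K η * (-1 : ℝ) ^ (η.card - 1)

/-- `fcount F k` is the number of `k`-dimensional simplices in `F`. -/
def fcount (F : Set (Finset (Euc N))) (k : ℕ) : ℕ :=
  {s ∈ F | s.card = k + 1}.ncard

/-- The combinatorial Euler characteristic `χ(F) = Σ_k (-1)^k f_k(F)`. -/
def eulerChar (F : Set (Finset (Euc N))) : ℤ :=
  ∑ᶠ k : ℕ, (-1 : ℤ) ^ k * fcount F k

/-- The link of `η` in `K`: all simplices `ω` of `K` disjoint from `η` such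
that the join `η ∗ ω` is a simplex of `K`. -/
def linkFaces (K : SimplicialComplex ℝ (Euc N)) (η : Finset (Euc N)) :
    Set (Finset (Euc N)) :=
  {ω | ω ∈ K.faces ∧ Disjoint η ω ∧ η ∪ ω ∈ K.faces}

/-- `K` is an `n`-dimensional simplicial complex. -/
def IsNDim (n : ℕ) (K : SimplicialComplex ℝ (Euc N)) : Prop :=
  (∀ s ∈ K.faces, s.card ≤ n + 1) ∧ ∃ s ∈ K.faces, s.card = n + 1

/-- `L` is a subdivision of `K`: same underlying space, and every open simplex
of `L` is contained in an open simplex of `K`. -/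
def IsSubdivision (K L : SimplicialComplex ℝ (Euc N)) : Prop :=
  L.space = K.space ∧ ∀ s ∈ L.faces, ∃ t ∈ K.faces, openSimplex s ⊆ openSimplex t

section Brouwer

theorem det_pos_of_small {E : Type*} [NormedAddCommGroup E] [InnerProductSpace ℝ E]
    [FiniteDimensional ℝ E] (A : E →L[ℝ] E) (hA : ‖A‖ < 1) :
    0 < (ContinuousLinearMap.id ℝ E + A).det := by
  have hne : ∀ s ∈ Set.Icc (0:ℝ) 1, (ContinuousLinearMap.id ℝ E + s • A).det ≠ 0 := by
    intro s hs h0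
    have h1 : LinearMap.ker ((ContinuousLinearMap.id ℝ E + s • A : E →L[ℝ] E) : E →ₗ[ℝ] E) ≠ ⊥ := by
      intro hk
      have := (LinearMap.isUnit_iff_ker_eq_bot _).2 hk
      have := (LinearMap.isUnit_iff_isUnit_det _).1 this
      exact this.ne_zero h0
    obtain ⟨v, hv, hv0⟩ := Submodule.exists_mem_ne_zero_of_ne_bot h1
    have hv' : v + s • A v = 0 := by simpa using hv
    have h2 : ‖v‖ = ‖s • A v‖ := by
      have h5 : v = -(s • A v) := eq_neg_of_add_eq_zero_left hv'
      calc ‖v‖ = ‖-(s • A v)‖ := congrArg norm h5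
        _ = _ := norm_neg _
    have h3 : ‖s • A v‖ ≤ ‖A‖ * ‖v‖ := by
      rw [norm_smul, Real.norm_of_nonneg hs.1]
      calc s * ‖A v‖ ≤ 1 * ‖A v‖ := by gcongr; exact hs.2
        _ ≤ _ := by rw [one_mul]; exact A.le_opNorm v
    have h4 : 0 < ‖v‖ := norm_pos_iff.2 hv0
    nlinarith
  have hcont : ContinuousOn (fun s : ℝ => (ContinuousLinearMap.id ℝ E + s • A).det)
      (Set.Icc 0 1) := by
    apply Continuous.continuousOn
    have := ContinuousLinearMap.continuous_det (𝕜 := ℝ) (E := E)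
    exact this.comp (by fun_prop)
  by_contra hcon
  push Not at hcon
  have h1 : (0:ℝ) ∈ Set.Icc ((fun s : ℝ => (ContinuousLinearMap.id ℝ E + s • A).det) 1)
      ((fun s : ℝ => (ContinuousLinearMap.id ℝ E + s • A).det) 0) := by
    constructor
    · simpa using hcon
    · simp [ContinuousLinearMap.det]
  obtain ⟨s, hs, h⟩ := intermediate_value_Icc' (zero_le_one) hcont h1
  exact hne s hs h

theorem det_interp {E : Type*} [NormedAddCommGroup E] [InnerProductSpace ℝ E]
    [FiniteDimensional ℝ E] (v : ℕ → ℝ) (hv : Function.Injective v) (A : E →L[ℝ] E) :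
    (ContinuousLinearMap.id ℝ E + A).det =
      ∑ k ∈ Finset.range (Module.finrank ℝ E + 1),
        (ContinuousLinearMap.id ℝ E + v k • A).det *
        (Lagrange.basis (Finset.range (Module.finrank ℝ E + 1)) v k).eval 1 := by
  classical
  set b := Module.finBasis ℝ E
  set M := LinearMap.toMatrix b b (A : E →ₗ[ℝ] E)
  set p : Polynomial ℝ := Matrix.det ((Polynomial.X : Polynomial ℝ) • M.map Polynomial.C
    + (1 : Matrix _ _ ℝ).map Polynomial.C) with hp
  have hdeg : p.natDegree ≤ Module.finrank ℝ E := by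
    have := Polynomial.natDegree_det_X_add_C_le M 1
    rwa [Fintype.card_fin] at this
  have hev : ∀ t : ℝ, p.eval t = (ContinuousLinearMap.id ℝ E + t • A).det := by
    intro t
    rw [ContinuousLinearMap.det, ← LinearMap.det_toMatrix b, hp]
    rw [← Polynomial.coe_evalRingHom, RingHom.map_det]
    congr 1
    ext i j
    simp [M, Matrix.one_apply, LinearMap.toMatrix_apply, Finsupp.single_apply]
    split_ifs <;> simp_all <;> ring
  have hlt : p.degree < (Finset.range (Module.finrank ℝ E + 1)).card := by
    rw [Finset.card_range]
    exact lt_of_le_of_lt Polynomial.degree_le_natDegree (by exact_mod_cast Nat.lt_succ_of_le hdeg)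
  have h := Lagrange.eq_interpolate (s := Finset.range (Module.finrank ℝ E + 1)) (v := v)
    hv.injOn hlt
  have h1 := congrArg (Polynomial.eval 1) h
  rw [hev, one_smul] at h1
  rw [h1, Lagrange.interpolate_apply, Polynomial.eval_finsetSum]
  refine Finset.sum_congr rfl fun k _ => ?_
  rw [Polynomial.eval_mul, Polynomial.eval_C, hev]

theorem no_retract {E : Type*} [NormedAddCommGroup E] [InnerProductSpace ℝ E]
    [FiniteDimensional ℝ E] [MeasurableSpace E] [BorelSpace E]
    (r : E → E) (hr : ContDiff ℝ 1 r) (R : ℝ) (hR : 0 < R)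
    (hid : ∀ x, ‖x‖ = R → r x = x) (hnorm : ∀ x, ‖r x‖ = R) : False := by
  set B : Set E := Metric.closedBall 0 R with hB
  have hBc : IsCompact B := isCompact_closedBall _ _
  have hBm : MeasurableSet B := Metric.isClosed_closedBall.measurableSet
  set g : E → E := fun x => r x - x with hg
  have hgd : ContDiff ℝ 1 g := hr.sub contDiff_id
  have hgc : Continuous (fderiv ℝ g) := hgd.continuous_fderiv (by norm_num)
  obtain ⟨L0, hL0⟩ := hBc.exists_bound_of_continuousOn hgc.continuousOn
  set L : ℝ := max L0 1 with hL
  have hLpos : 0 < L := lt_of_lt_of_le one_pos (le_max_right _ _)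
  have hLb : ∀ x ∈ B, ‖fderiv ℝ g x‖ ≤ L := fun x hx => (hL0 x hx).trans (le_max_left _ _)
  have hglip : ∀ x ∈ B, ∀ y ∈ B, ‖g y - g x‖ ≤ L * ‖y - x‖ := by
    intro x hx y hy
    exact (convex_closedBall (0:E) R).norm_image_sub_le_of_norm_fderiv_le
      (fun z _ => (hgd.differentiable (by norm_num)).differentiableAt) hLb hx hy
  set G : E → E := fun x => if x ∈ B then g x else 0 with hG
  have hg0 : ∀ x, ‖x‖ = R → g x = 0 := fun x hx => by simp [hg, hid x hx]
  have hGmix : ∀ x ∈ B, ∀ y ∉ B, ‖g x‖ ≤ L * ‖y - x‖ := by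
    intro x hx y hy
    have hx' : ‖x‖ ≤ R := by simpa [hB] using hx
    have hy' : R < ‖y‖ := by simpa [hB] using hy
    have hcont : ContinuousOn (fun s : ℝ => ‖x + s • (y - x)‖) (Set.Icc 0 1) := by fun_prop
    obtain ⟨s, hs, hsR⟩ := intermediate_value_Icc zero_le_one hcont
      (show R ∈ Set.Icc _ _ by constructor <;> simp <;> linarith)
    have hsR' : ‖x + s • (y - x)‖ = R := hsR
    have hz : x + s • (y - x) ∈ B := by simp [hB, hsR']
    have := hglip x hx _ hz
    rw [hg0 _ hsR', zero_sub, norm_neg, add_sub_cancel_left, norm_smul,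
      Real.norm_of_nonneg hs.1] at this
    refine this.trans ?_
    have : s * ‖y - x‖ ≤ 1 * ‖y - x‖ := by gcongr; exact hs.2
    rw [one_mul] at this
    gcongr
  have hGlip : ∀ x y, ‖G y - G x‖ ≤ L * ‖y - x‖ := by
    intro x y
    by_cases hx : x ∈ B <;> by_cases hy : y ∈ B
    · simpa [hG, hx, hy] using hglip x hx y hy
    · simpa [hG, hx, hy] using hGmix x hx y hy
    · have := hGmix y hy x hx
      rw [norm_sub_rev x y] at this
      simpa [hG, hx, hy] using this
    · simp [hG, hx, hy]; positivity
  set μ : Measure E := volume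
  have key : ∀ t : ℝ, 0 < t → t * L < 1 →
      ∫ x in B, (ContinuousLinearMap.id ℝ E + t • fderiv ℝ g x).det ∂μ = μ.real B := by
    intro t ht htL
    have hinj : Function.Injective (fun x => x + t • G x) := by
      intro x y hxy
      have h1 : y - x = t • (G x - G y) := by
        have : x + t • G x = y + t • G y := hxy
        rw [smul_sub]
        rw [sub_eq_sub_iff_add_eq_add, ← this, add_comm]
      have h2 : ‖y - x‖ ≤ t * L * ‖y - x‖ := by
        calc ‖y - x‖ = t * ‖G x - G y‖ := by rw [h1, norm_smul, Real.norm_of_nonneg ht.le]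
          _ ≤ t * (L * ‖x - y‖) := by gcongr; exact hGlip y x
          _ = _ := by rw [norm_sub_rev]; ring
      have h3 : ‖y - x‖ = 0 := by
        by_contra hne
        have : 0 < ‖y - x‖ := lt_of_le_of_ne (norm_nonneg _) (Ne.symm hne)
        nlinarith
      exact (sub_eq_zero.1 (norm_eq_zero.1 h3)).symm
    have hsurj : Function.Surjective (fun x => x + t • G x) := by
      intro y
      have hc : ContractingWith (Real.toNNReal (t * L)) (fun x => y - t • G x) := by
        refine ⟨by simpa using htL, LipschitzWith.of_dist_le_mul fun a b => ?_⟩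
        rw [dist_eq_norm, dist_eq_norm]
        have : y - t • G a - (y - t • G b) = t • (G b - G a) := by rw [smul_sub]; abel
        rw [this, norm_smul, Real.norm_of_nonneg ht.le]
        calc t * ‖G b - G a‖ ≤ t * (L * ‖b - a‖) := by gcongr; exact hGlip a b
          _ = _ := by rw [norm_sub_rev, Real.coe_toNNReal _ (by positivity)]; ring
      refine ⟨hc.fixedPoint, ?_⟩
      have := hc.fixedPoint_isFixedPt
      have h2 : y - t • G hc.fixedPoint = hc.fixedPoint := this
      show hc.fixedPoint + t • G hc.fixedPoint = y
      nth_rewrite 1 [← h2]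
      abel
    have himg : (fun x => x + t • g x) '' B = B := by
      have h1 : (fun x => x + t • g x) '' B = (fun x => x + t • G x) '' B := by
        apply Set.image_congr
        intro x hx
        simp [hG, hx]
      have h2 : (fun x => x + t • G x) '' Bᶜ = Bᶜ := by
        have : (fun x => x + t • G x) '' Bᶜ = id '' Bᶜ := by
          apply Set.image_congr
          intro x hx
          have : x ∉ B := hx
          simp [hG, this]
        simpa using this
      rw [h1]
      have h3 := Set.image_compl_eq (s := B) ⟨hinj, hsurj⟩
      rw [h2] at h3
      exact (compl_injective h3).symm
    have hcv := lintegral_abs_det_fderiv_eq_addHaar_image (s := B) μ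
      (f := fun x => x + t • g x)
      (f' := fun x => ContinuousLinearMap.id ℝ E + t • fderiv ℝ g x) hBm
      (fun x _ => ((hasFDerivAt_id x).add
        (((hgd.differentiable (by norm_num)).differentiableAt.hasFDerivAt).const_smul
          t)).hasFDerivWithinAt)
      (by
        intro x hx y hy hxy
        apply hinj
        simpa [hG, hx, hy] using hxy)
    rw [himg] at hcv
    have hpos : ∀ x ∈ B, 0 < (ContinuousLinearMap.id ℝ E + t • fderiv ℝ g x).det := by
      intro x hx
      apply det_pos_of_small
      rw [norm_smul, Real.norm_of_nonneg ht.le]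
      exact lt_of_le_of_lt (by gcongr; exact hLb x hx) htL
    rw [integral_eq_lintegral_of_nonneg_ae]
    · rw [Measure.real, ← hcv]
      congr 1
      refine setLIntegral_congr_fun hBm fun x hx => ?_
      rw [abs_of_pos (hpos x hx)]
    · filter_upwards [ae_restrict_mem hBm] with x hx using (hpos x hx).le
    · apply Continuous.aestronglyMeasurable
      exact (ContinuousLinearMap.continuous_det (𝕜 := ℝ) (E := E)).comp (by fun_prop)
  have hone : ∫ x in B, (ContinuousLinearMap.id ℝ E + fderiv ℝ g x).det ∂μ = μ.real B := by
    set v : ℕ → ℝ := fun k => (1 / (2 * L)) * (1 / ((k:ℝ) + 1)) with hv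
    have hvinj : Function.Injective v := by
      intro a b hab
      have h2 : (1 / (2 * L)) ≠ 0 := by positivity
      have h1 : (1 / ((a:ℝ) + 1)) = 1 / ((b:ℝ) + 1) := mul_left_cancel₀ h2 hab
      rw [one_div, one_div, inv_inj] at h1
      have : (a:ℝ) = b := by linarith
      exact_mod_cast this
    have hvpos : ∀ k, 0 < v k := fun k => by simp only [hv]; positivity
    have hvL : ∀ k, v k * L < 1 := by
      intro k
      have : v k * L = (1/2) * (1 / ((k:ℝ) + 1)) := by
        simp only [hv]; field_simp
      rw [this]
      have : (1 / ((k:ℝ) + 1)) ≤ 1 := by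
        rw [div_le_one (by positivity)]
        have : (0:ℝ) ≤ k := by positivity
        linarith
      linarith
    have hint : ∀ x, (ContinuousLinearMap.id ℝ E + fderiv ℝ g x).det = _ :=
      fun x => det_interp v hvinj (fderiv ℝ g x)
    rw [setIntegral_congr_fun hBm (fun x _ => hint x)]
    rw [integral_finsetSum]
    · simp_rw [integral_mul_const, key _ (hvpos _) (hvL _)]
      rw [← Finset.mul_sum, ← Polynomial.eval_finsetSum, Lagrange.sum_basis hvinj.injOn (by simp)]
      simp
    · intro k _
      apply ContinuousOn.integrableOn_compact hBc; apply Continuous.continuousOn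
      exact ((ContinuousLinearMap.continuous_det (𝕜 := ℝ) (E := E)).comp (by fun_prop)).mul
        continuous_const
  have hzero : ∀ x, (ContinuousLinearMap.id ℝ E + fderiv ℝ g x).det = 0 := by
    intro x
    have hrd : HasFDerivAt r (fderiv ℝ r x) x :=
      (hr.differentiable (by norm_num)).differentiableAt.hasFDerivAt
    have h1 : ContinuousLinearMap.id ℝ E + fderiv ℝ g x = fderiv ℝ r x := by
      have : HasFDerivAt g (fderiv ℝ r x - ContinuousLinearMap.id ℝ E) x :=
        hrd.sub (hasFDerivAt_id x)
      rw [this.fderiv]; abel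
    rw [h1]
    by_contra hne
    have hu : IsUnit ((fderiv ℝ r x : E →L[ℝ] E) : E →ₗ[ℝ] E) :=
      (LinearMap.isUnit_iff_isUnit_det _).2 (isUnit_iff_ne_zero.2 hne)
    have hs := LinearMap.range_eq_top.1 ((LinearMap.isUnit_iff_range_eq_top _).1 hu)
    obtain ⟨w, hw⟩ := hs (r x)
    have hd := hrd.inner ℝ hrd
    have hcst : (fun y => inner ℝ (r y) (r y)) = fun _ => R ^ 2 := by
      funext y; rw [real_inner_self_eq_norm_sq, hnorm]
    rw [hcst] at hd
    have h0 := hd.unique (hasFDerivAt_const _ _)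
    have h0w := congrArg (fun T : E →L[ℝ] ℝ => T w) h0
    have hw' : fderiv ℝ r x w = r x := hw
    simp [hw', hnorm] at h0w
    exact hR.ne' h0w
  simp_rw [hzero] at hone
  simp only [integral_zero] at hone
  have hpos : 0 < μ.real B := by
    rw [Measure.real]
    exact ENNReal.toReal_pos (Metric.measure_closedBall_pos μ 0 hR).ne' hBc.measure_lt_top.ne
  linarith

end Brouwer

section InvDomain

theorem exists_zero_of_near_id {E : Type*} [NormedAddCommGroup E] [InnerProductSpace ℝ E]
    [FiniteDimensional ℝ E] [MeasurableSpace E] [BorelSpace E]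
    (H : E → E) (hH : ContinuousOn H (Metric.closedBall 0 1))
    (hnear : ∀ x ∈ Metric.closedBall (0:E) 1, ‖H x - x‖ ≤ 1) :
    ∃ x ∈ Metric.closedBall (0:E) 1, H x = 0 := by
  by_contra hcon
  push Not at hcon
  set P : E → E := fun x => (max 1 ‖x‖)⁻¹ • x with hP
  have hmaxpos : ∀ x : E, 0 < max 1 ‖x‖ := fun x => lt_of_lt_of_le one_pos (le_max_left _ _)
  have hPc : Continuous P := by
    apply Continuous.smul _ continuous_id
    exact Continuous.inv₀ (by fun_prop) (fun x => (hmaxpos x).ne')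
  have hPB : ∀ x, P x ∈ Metric.closedBall (0:E) 1 := by
    intro x
    rw [mem_closedBall_zero_iff, hP]
    simp only
    rw [norm_smul, norm_inv, Real.norm_of_nonneg (hmaxpos x).le, inv_mul_le_iff₀ (hmaxpos x)]
    simp
  set q : E → E := fun x => x + (max 0 (min 1 (2 - ‖x‖))) • (H (P x) - P x) with hq
  have hHPc : Continuous fun x => H (P x) := hH.comp_continuous hPc hPB
  have hqc : Continuous q := by
    exact continuous_id.add (Continuous.smul (by fun_prop) (hHPc.sub hPc))
  have hqne : ∀ x, q x ≠ 0 := by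
    intro x h0
    by_cases hx : ‖x‖ ≤ 1
    · have hPx : P x = x := by simp [hP, max_eq_left hx]
      have hf : max 0 (min 1 (2 - ‖x‖)) = 1 := by
        rw [min_eq_left (by linarith)]; simp
      apply hcon x (by simpa using hx)
      have : q x = H x := by simp only [hq]; rw [hf, hPx, one_smul]; abel
      rw [← this, h0]
    · push Not at hx
      have h1 : ‖x‖ = ‖(max 0 (min 1 (2 - ‖x‖))) • (H (P x) - P x)‖ := by
        have h5 := eq_neg_of_add_eq_zero_left h0
        calc ‖x‖ = _ := congrArg norm h5
          _ = _ := norm_neg _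
      rw [norm_smul, Real.norm_of_nonneg (le_max_left _ _)] at h1
      have h2 := hnear _ (hPB x)
      have h3 : max 0 (min 1 (2 - ‖x‖)) ≤ 1 := max_le zero_le_one (min_le_left _ _)
      have h4 : (0:ℝ) ≤ max 0 (min 1 (2 - ‖x‖)) := le_max_left _ _
      nlinarith [norm_nonneg (H (P x) - P x)]
  have hqid : ∀ x, 2 ≤ ‖x‖ → q x = x := by
    intro x hx
    have : max 0 (min 1 (2 - ‖x‖)) = 0 := max_eq_left ((min_le_right _ _).trans (by linarith))
    simp only [hq]; rw [this]; simp
  obtain ⟨q', hq'd, hq'n, hq'S, -⟩ := hqc.exists_contDiff_approx_and_eqOn 1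
    (ε := fun x => ‖q x‖) hqc.norm (fun x => norm_pos_iff.2 (hqne x))
    (S := {x : E | 3 ≤ ‖x‖}) (U := {x : E | 2 < ‖x‖})
    (isClosed_le continuous_const continuous_norm)
    (by
      rw [IsOpen.mem_nhdsSet (isOpen_lt continuous_const continuous_norm)]
      intro x hx
      have : 3 ≤ ‖x‖ := hx
      show 2 < ‖x‖
      linarith)
    (contDiffOn_id.congr (fun x hx => hqid x (le_of_lt hx)))
  have hq'ne : ∀ x, q' x ≠ 0 := by
    intro x h0
    have := hq'n x
    rw [h0, dist_zero_left] at this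
    exact lt_irrefl _ this
  refine no_retract (fun x => (3 / ‖q' x‖) • q' x) ?_ 3 (by norm_num) ?_ ?_
  · apply ContDiff.smul _ (by exact_mod_cast hq'd)
    apply ContDiff.div contDiff_const
    · exact ContDiff.norm ℝ (by exact_mod_cast hq'd) hq'ne
    · intro x; exact norm_ne_zero_iff.2 (hq'ne x)
  · intro x hx
    have h1 : q' x = x := by
      rw [hq'S (show 3 ≤ ‖x‖ from hx.ge), hqid x (by linarith)]
    rw [h1, hx]; simp
  · intro x
    rw [norm_smul, norm_div, norm_norm, Real.norm_of_nonneg (by norm_num : (0:ℝ) ≤ 3)]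
    exact div_mul_cancel₀ _ (norm_ne_zero_iff.2 (hq'ne x))

theorem invariance_unit {E : Type*} [NormedAddCommGroup E] [InnerProductSpace ℝ E]
    [FiniteDimensional ℝ E] [MeasurableSpace E] [BorelSpace E]
    (f : E → E) (hf : ContinuousOn f (Metric.closedBall 0 1))
    (hinj : Set.InjOn f (Metric.closedBall 0 1)) :
    f '' (Metric.closedBall 0 1) ∈ nhds (f 0) := by
  rcases subsingleton_or_nontrivial E with hsub | hnt
  · have : f '' (Metric.closedBall 0 1) = Set.univ := by
      apply Set.eq_univ_of_forall
      intro y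
      exact ⟨0, by simp, Subsingleton.elim _ _⟩
    rw [this]; exact univ_mem
  set B : Set E := Metric.closedBall 0 1 with hB
  have hBc : IsCompact B := isCompact_closedBall _ _
  have : CompactSpace B := isCompact_iff_compactSpace.1 hBc
  have h0B : (0:E) ∈ B := by simp [hB]
  have hcl : Topology.IsClosedEmbedding (B.domRestrict f) :=
    (continuousOn_iff_continuous_domRestrict.1 hf).isClosedEmbedding
      (Set.injOn_iff_injective.1 hinj)
  have : TietzeExtension.{_, _} E := TietzeExtension.of_tvs ℝ
  obtain ⟨G, hG⟩ := ContinuousMap.exists_extension hcl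
    (⟨Subtype.val, continuous_subtype_val⟩ : C(B, E))
  have hGf : ∀ x ∈ B, G (f x) = x := by
    intro x hx
    exact congrArg (fun g : C(B, E) => g ⟨x, hx⟩) hG
  set S := f '' B with hS
  have hSc : IsCompact S := hBc.image_of_continuousOn hf
  by_contra hcon
  have hG0 : G (f 0) = 0 := hGf 0 h0B
  obtain ⟨ε', hε', hGε'⟩ := Metric.continuousAt_iff.1 (G.continuous.continuousAt (x := f 0))
    (1/10) (by norm_num)
  set ε := ε' / 2 with hε
  have hεpos : 0 < ε := by positivity
  have hGε : ∀ y, ‖y - f 0‖ < 2 * ε → ‖G y‖ < 1/10 := by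
    intro y hy
    have := @hGε' y (by rw [dist_eq_norm]; linarith)
    rwa [hG0, dist_zero_right] at this
  obtain ⟨c, hcε, hcS⟩ : ∃ c, ‖c - f 0‖ < ε ∧ c ∉ S := by
    by_contra h
    push Not at h
    apply hcon
    refine Metric.mem_nhds_iff.2 ⟨ε, hεpos, fun y hy => h y ?_⟩
    rwa [mem_ball_iff_norm] at hy
  set S1 : Set E := S ∩ {y | ε ≤ ‖y - c‖} with hS1
  have hS1c : IsCompact S1 := hSc.inter_right (isClosed_le continuous_const (by fun_prop))
  have hGne : ∀ y ∈ S1, 0 < ‖G y‖ := by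
    rintro y ⟨⟨x, hx, rfl⟩, hy⟩
    rw [hGf x hx, norm_pos_iff]
    rintro rfl
    have : ε ≤ ‖f 0 - c‖ := hy
    rw [norm_sub_rev] at this
    linarith
  obtain ⟨δ, hδ, hδ10, hδG⟩ : ∃ δ > 0, δ ≤ 1/10 ∧ ∀ y ∈ S1, δ ≤ ‖G y‖ := by
    rcases S1.eq_empty_or_nonempty with he | hne
    · exact ⟨1/10, by norm_num, le_rfl, by simp [he]⟩
    · obtain ⟨y0, hy0, hmin⟩ := hS1c.exists_isMinOn hne (f := fun y => ‖G y‖) (by fun_prop)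
      exact ⟨min (1/10) ‖G y0‖, lt_min (by norm_num) (hGne y0 hy0), min_le_left _ _,
        fun y hy => (min_le_right _ _).trans (hmin hy)⟩
  obtain ⟨P, hPd, hPn, -⟩ := G.continuous.exists_contDiff_approx 1 (ε := fun _ => δ / 2)
    continuous_const (fun _ => by positivity)
  have hnull : volume (P '' (Metric.sphere c ε)) = 0 := by
    apply addHaar_image_eq_zero_of_differentiableOn_of_addHaar_eq_zero
    · exact (hPd.differentiable (by norm_num)).differentiableOn
    · exact Measure.addHaar_sphere _ _ _
  obtain ⟨w, hwδ, hw⟩ : ∃ w, ‖w‖ < δ / 2 ∧ w ∉ P '' (Metric.sphere c ε) := by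
    by_contra h
    push Not at h
    have hsub : Metric.ball (0:E) (δ/2) ⊆ P '' (Metric.sphere c ε) := by
      intro w hw
      exact h w (by simpa using hw)
    have h1 := measure_mono_null hsub hnull
    exact (Metric.measure_ball_pos volume (0:E) (by positivity : 0 < δ/2)).ne' h1
  set P' : E → E := fun y => P y - w with hP'
  have hP'G : ∀ y, ‖P' y - G y‖ < δ := by
    intro y
    have h1 := hPn y
    rw [dist_eq_norm] at h1
    have : P' y - G y = (P y - G y) - w := by simp only [hP']; abel
    rw [this]
    have := norm_sub_le (P y - G y) w
    linarith
  have hP'c : Continuous P' := by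
    have := hPd.continuous
    rw [hP']; fun_prop
  set Φ : E → E := fun y => c + (max 1 (ε / ‖y - c‖)) • (y - c) with hΦ
  have hfc : ∀ x ∈ B, f x - c ≠ 0 := by
    intro x hx h
    exact hcS ⟨x, hx, sub_eq_zero.1 h⟩
  have hΦc : ContinuousOn (fun x => Φ (f x)) B := by
    have h1 : ContinuousOn (fun x => ε / ‖f x - c‖) B := by
      apply ContinuousOn.div continuousOn_const (by fun_prop)
      intro x hx
      exact norm_ne_zero_iff.2 (hfc x hx)
    simp only [hΦ]
    exact continuousOn_const.add ((continuousOn_const.sup h1).smul (hf.sub continuousOn_const))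
  have hΦ1 : ∀ y, ε ≤ ‖y - c‖ → Φ y = y := by
    intro y hy
    have h1 : ε / ‖y - c‖ ≤ 1 := by
      rw [div_le_one (by linarith)]; exact hy
    simp only [hΦ]; rw [max_eq_left h1]; simp
  have hΦ2 : ∀ y, y - c ≠ 0 → ‖y - c‖ < ε → ‖Φ y - c‖ = ε := by
    intro y hy0 hy
    have hpos : 0 < ‖y - c‖ := norm_pos_iff.2 hy0
    have h1 : 1 ≤ ε / ‖y - c‖ := by
      rw [le_div_iff₀ hpos]; linarith
    simp only [hΦ]; rw [max_eq_right h1, add_sub_cancel_left, norm_smul, norm_div, norm_norm,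
      Real.norm_of_nonneg hεpos.le]
    exact div_mul_cancel₀ _ hpos.ne'
  obtain ⟨x, hx, hx0⟩ := exists_zero_of_near_id (fun x => P' (Φ (f x)))
    (hP'c.comp_continuousOn hΦc) (by
      intro x hx
      by_cases hy : ε ≤ ‖f x - c‖
      · rw [hΦ1 _ hy]
        have := hP'G (f x)
        rw [hGf x hx] at this
        linarith
      · push Not at hy
        have h2 := hΦ2 _ (hfc x hx) hy
        have h3 := hP'G (Φ (f x))
        have h4 : ‖G (Φ (f x))‖ < 1/10 := by
          apply hGε
          have := norm_add_le (Φ (f x) - c) (c - f 0)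
          rw [sub_add_sub_cancel] at this
          linarith
        have h5 : ‖G (f x)‖ < 1/10 := by
          apply hGε
          have := norm_add_le (f x - c) (c - f 0)
          rw [sub_add_sub_cancel] at this
          linarith
        rw [hGf x hx] at h5
        have h6 : P' (Φ (f x)) - x = (P' (Φ (f x)) - G (Φ (f x))) + G (Φ (f x)) - x := by abel
        have h7 := norm_sub_le ((P' (Φ (f x)) - G (Φ (f x))) + G (Φ (f x))) x
        have h8 := norm_add_le (P' (Φ (f x)) - G (Φ (f x))) (G (Φ (f x)))
        rw [h6]
        linarith)
  by_cases hy : ε ≤ ‖f x - c‖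
  · rw [hΦ1 _ hy] at hx0
    have h1 := hP'G (f x)
    rw [hx0, zero_sub, norm_neg] at h1
    have h2 := hδG (f x) ⟨⟨x, hx, rfl⟩, hy⟩
    linarith
  · push Not at hy
    have h2 := hΦ2 _ (hfc x hx) hy
    apply hw
    refine ⟨Φ (f x), by rw [mem_sphere_iff_norm]; exact h2, ?_⟩
    exact sub_eq_zero.1 hx0

/-- Invariance of domain. -/
theorem invariance_of_domain {E F : Type*} [NormedAddCommGroup E] [NormedSpace ℝ E]
    [FiniteDimensional ℝ E] [NormedAddCommGroup F] [NormedSpace ℝ F]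
    [FiniteDimensional ℝ F] (hEF : Module.finrank ℝ E = Module.finrank ℝ F)
    (f : E → F) (x0 : E) (V : Set E) (hV : V ∈ nhds x0) (hf : ContinuousOn f V)
    (hinj : Set.InjOn f V) : f '' V ∈ nhds (f x0) := by
  set W := EuclideanSpace ℝ (Fin (Module.finrank ℝ E))
  have e : W ≃L[ℝ] E := ContinuousLinearEquiv.ofFinrankEq (by simp [W])
  have e' : F ≃L[ℝ] W := ContinuousLinearEquiv.ofFinrankEq (by simp [W, hEF])
  have hcts : Continuous fun u : W => x0 + e u := by fun_prop
  have h1 : (fun u : W => x0 + e u) ⁻¹' V ∈ nhds (0:W) := by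
    apply hcts.continuousAt
    simpa using hV
  obtain ⟨δ, hδ, hδV⟩ := Metric.nhds_basis_closedBall.mem_iff.1 h1
  have hmap : ∀ u ∈ Metric.closedBall (0:W) 1, x0 + e (δ • u) ∈ V := by
    intro u hu
    apply hδV
    rw [mem_closedBall_zero_iff] at hu ⊢
    rw [norm_smul, Real.norm_of_nonneg hδ.le]
    nlinarith
  have key := invariance_unit (fun u : W => e' (f (x0 + e (δ • u))))
    (by
      apply e'.continuous.comp_continuousOn
      exact hf.comp (by fun_prop) hmap)
    (by
      intro u hu v hv huv
      have h2 := hinj (hmap u hu) (hmap v hv) (e'.injective huv)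
      have h3 := e.injective (add_left_cancel h2)
      exact smul_right_injective _ hδ.ne' h3)
  have h2 : e' ⁻¹' ((fun u : W => e' (f (x0 + e (δ • u)))) '' Metric.closedBall 0 1) ∈
      nhds (f x0) := by
    apply e'.continuous.continuousAt
    simpa using key
  refine mem_of_superset h2 ?_
  rintro y ⟨u, hu, huy⟩
  exact ⟨_, hmap u hu, e'.injective huy⟩

end InvDomain

section Cone

theorem no_embed {E F : Type*} [NormedAddCommGroup E] [NormedSpace ℝ E]
    [FiniteDimensional ℝ E] [NormedAddCommGroup F] [InnerProductSpace ℝ F]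
    [FiniteDimensional ℝ F] (D : Submodule ℝ F) (hD : Module.finrank ℝ D < Module.finrank ℝ E)
    (f : E → F) (p0 : F) (x0 : E) (V : Set E) (hV : V ∈ nhds x0) (hf : ContinuousOn f V)
    (hinj : Set.InjOn f V) (hfD : ∀ x ∈ V, f x - p0 ∈ D) : False := by
  obtain ⟨L, hL⟩ : ∃ L : D →ₗ[ℝ] E, Function.Injective L :=
    finrank_le_iff_exists_linearMap.1 hD.le
  have hrange : LinearMap.range L ≠ ⊤ := by
    intro h
    have h1 := LinearMap.finrank_range_of_inj hL
    rw [h, finrank_top] at h1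
    omega
  set k : E → E := fun x => L (D.orthogonalProjectionOnto (f x - p0)) with hk
  have hLc : Continuous L := L.continuous_of_finiteDimensional
  have hkc : ContinuousOn k V := by
    apply hLc.comp_continuousOn
    exact D.orthogonalProjectionOnto.continuous.comp_continuousOn (hf.sub continuousOn_const)
  have hkinj : Set.InjOn k V := by
    intro x hx y hy hxy
    have h1 := hL hxy
    have h2 : ((D.orthogonalProjectionOnto (f x - p0) : D) : F) =
      (D.orthogonalProjectionOnto (f y - p0) : D) := congrArg _ h1
    rw [← Submodule.starProjection_apply, ← Submodule.starProjection_apply,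
      Submodule.starProjection_eq_self_iff.2 (hfD x hx),
      Submodule.starProjection_eq_self_iff.2 (hfD y hy)] at h2
    exact hinj hx hy (sub_left_injective h2)
  have h := invariance_of_domain rfl k x0 V hV hkc hkinj
  apply hrange
  apply Submodule.eq_top_of_nonempty_interior'
  refine ⟨k x0, ?_⟩
  rw [mem_interior_iff_mem_nhds]
  refine mem_of_superset h ?_
  rintro _ ⟨x, _, rfl⟩
  exact ⟨_, rfl⟩

/-- total version of a homeomorphism between subsets -/
theorem homeo_total {X Y Z : Type*} [TopologicalSpace X] [TopologicalSpace Y] [TopologicalSpace Z]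
    (U : Set X) (T : Set Y) [Nonempty X] (h : U ≃ₜ T × Z) :
    ∃ (I : Y × Z → X), ContinuousOn I (T ×ˢ Set.univ) ∧
      (∀ p ∈ T ×ˢ (Set.univ : Set Z), I p ∈ U) ∧
      Set.InjOn I (T ×ˢ (Set.univ : Set Z)) ∧
      (∀ (x : X) (hx : x ∈ U), I ((h ⟨x, hx⟩).1.1, (h ⟨x, hx⟩).2) = x) := by
  set I : Y × Z → X := fun p => if hp : p.1 ∈ T then (h.symm (⟨p.1, hp⟩, p.2) : U).1
    else Classical.arbitrary X with hI
  have hIp : ∀ p (hp : p.1 ∈ T), I p = (h.symm (⟨p.1, hp⟩, p.2) : U).1 := by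
    intro p hp; simp [hI, hp]
  refine ⟨I, ?_, ?_, ?_, ?_⟩
  · rw [continuousOn_iff_continuous_domRestrict]
    have : (T ×ˢ (Set.univ : Set Z)).domRestrict I =
        fun p => (h.symm (⟨p.1.1, p.2.1⟩, p.1.2) : U).1 := by
      funext p
      exact hIp p.1 p.2.1
    rw [this]
    fun_prop
  · intro p hp
    rw [hIp p hp.1]
    exact Subtype.coe_prop _
  · intro p hp q hq hpq
    rw [hIp p hp.1, hIp q hq.1] at hpq
    have := h.symm.injective (Subtype.ext hpq)
    simp only [Prod.mk.injEq, Subtype.mk.injEq] at this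
    exact Prod.ext this.1 this.2
  · intro x hx
    rw [hIp _ (Subtype.coe_prop _)]
    simp

theorem zero_mem_Tcone (r : ℕ) : (0 : ℝ × ℝ) ∈ Tcone r := Or.inl rfl

theorem mem_Tcone {r k : ℕ} (hk : k < r) {t : ℝ} (h0 : 0 ≤ t) (h1 : t < 1) :
    (t, t * k) ∈ Tcone r := by
  right
  simp only [Set.mem_iUnion, Finset.mem_range]
  exact ⟨k, hk, t, h0, h1, by simp⟩

theorem Tcone_le_one {r : ℕ} (hr : r ≤ 1) {p : ℝ × ℝ} (hp : p ∈ Tcone r) :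
    0 ≤ p.1 ∧ p.2 = 0 := by
  rcases hp with hp | hp
  · rw [Set.mem_singleton_iff.1 hp]; simp
  · simp only [Set.mem_iUnion, Finset.mem_range] at hp
    obtain ⟨k, hk, t, h0, h1, rfl⟩ := hp
    have : k = 0 := by omega
    subst this
    simpa using h0

theorem cone_rank {n r : ℕ} {S : Set (Euc N)} {z : Euc N} (hz : z ∈ S)
    (g : ℝ × EuclideanSpace ℝ (Fin (n - 1)) → Euc N)
    (C : Set (ℝ × EuclideanSpace ℝ (Fin (n - 1)))) (hC : IsCompact C) (hC0 : C ∈ nhds 0)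
    (hg : ContinuousOn g C) (hinj : Set.InjOn g C) (hg0 : g 0 = z) (hgS : ∀ c ∈ C, g c ∈ S)
    (hgn : g '' C ∈ nhdsWithin z S) (hcone : HasConeNbhd n r S z) : r = 2 := by
  obtain ⟨U, hU, hUS, h, hh⟩ := hcone
  have hzU : z ∈ U := mem_of_mem_nhdsWithin hz hU
  have hz1 := hh hzU
  have h0C : (0 : ℝ × Euc (n - 1)) ∈ C := mem_of_mem_nhds hC0
  obtain ⟨I, hIc, hIU, hIinj, hIh⟩ := homeo_total U (Tcone r) h
  set y := (h ⟨z, hzU⟩).2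
  have hIz : I (0, y) = z := by
    have := hIh z hzU
    rwa [hz1] at this
  by_contra hr2
  have hcase : r ≤ 1 ∨ 3 ≤ r := by omega
  rcases hcase with hr | hr
  ·
    set C' : Set (ℝ × Euc (n - 1)) := C ∩ {c | g c ∈ U} with hC'
    have hC'n : C' ∈ nhds 0 := by
      apply inter_mem hC0
      have h1 : Tendsto g (nhds 0) (nhdsWithin z S) := by
        apply tendsto_nhdsWithin_of_tendsto_nhds_of_eventually_within
        · rw [← hg0]; exact hg.continuousAt hC0
        · filter_upwards [hC0] with c hc using hgS c hc
      exact h1 hU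
    set k : ℝ × Euc (n - 1) → ℝ × Euc (n - 1) := fun c => if hc : g c ∈ U then
      ((h ⟨g c, hc⟩).1.1.1, (h ⟨g c, hc⟩).2) else 0 with hk
    have hkc : ContinuousOn k C' := by
      rw [continuousOn_iff_continuous_domRestrict]
      have : C'.domRestrict k = fun c : C' => ((h ⟨g c.1, c.2.2⟩).1.1.1, (h ⟨g c.1, c.2.2⟩).2) := by
        funext c
        have : g c.1 ∈ U := c.2.2
        simp [hk, this]
      rw [this]
      have hgc : Continuous fun c : C' => g c.1 :=
        continuousOn_iff_continuous_domRestrict.1 (hg.mono Set.inter_subset_left)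
      have hgc' : Continuous fun c : C' => (⟨g c.1, c.2.2⟩ : U) := hgc.subtype_mk _
      have hhc : Continuous fun c : C' => h ⟨g c.1, c.2.2⟩ := h.continuous.comp hgc'
      fun_prop
    have hkinj : Set.InjOn k C' := by
      intro a ha b hb hab
      have ha2 : g a ∈ U := ha.2
      have hb2 : g b ∈ U := hb.2
      simp only [hk, ha2, hb2, dif_pos, Prod.mk.injEq] at hab
      apply hinj ha.1 hb.1
      have hA := Tcone_le_one hr (h ⟨g a, ha2⟩).1.2
      have hB := Tcone_le_one hr (h ⟨g b, hb2⟩).1.2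
      have h1 : h ⟨g a, ha2⟩ = h ⟨g b, hb2⟩ := by
        refine Prod.ext (Subtype.ext (Prod.ext hab.1 ?_)) hab.2
        rw [hA.2, hB.2]
      have h2 := h.injective h1
      exact congrArg Subtype.val h2
    have hiod := invariance_of_domain rfl k 0 C' hC'n hkc hkinj
    have hk0 : k 0 = (0, y) := by
      have h1 : g 0 ∈ U := by rw [hg0]; exact hzU
      simp only [hk, h1, dif_pos]
      have h2 : (⟨g 0, h1⟩ : U) = ⟨z, hzU⟩ := Subtype.ext hg0
      rw [h2, hz1]; rfl
    rw [hk0] at hiod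
    have hpath : Tendsto (fun t : ℝ => ((-t, y) : ℝ × Euc (n - 1))) (nhdsWithin 0 (Set.Ioi 0))
        (nhds (0, y)) := by
      apply tendsto_nhdsWithin_of_tendsto_nhds
      have : Continuous (fun t : ℝ => ((-t, y) : ℝ × Euc (n - 1))) := by fun_prop
      simpa using this.tendsto 0
    have hev := hpath hiod
    obtain ⟨t, ⟨c, hc, hct⟩, ht⟩ := (Filter.inter_mem hev self_mem_nhdsWithin :
      _ ∈ nhdsWithin (0:ℝ) (Set.Ioi 0)) |> Filter.nonempty_of_mem
    have hc2 : g c ∈ U := hc.2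
    simp only [hk, hc2, dif_pos, Prod.mk.injEq] at hct
    have hA := Tcone_le_one hr (h ⟨g c, hc2⟩).1.2
    have ht' : 0 < t := ht
    linarith [hct.1, hA.1]
  · have : CompactSpace C := isCompact_iff_compactSpace.1 hC
    set ψ : Euc N → ℝ × Euc (n - 1) := Function.invFunOn g C with hψ
    have hψg : ∀ c ∈ C, ψ (g c) = c := fun c hc => hinj.leftInvOn_invFunOn hc
    have hψc : ContinuousOn ψ (g '' C) := by
      have hemb : Topology.IsClosedEmbedding (C.domRestrict g) :=
        (continuousOn_iff_continuous_domRestrict.1 hg).isClosedEmbedding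
          (Set.injOn_iff_injective.1 hinj)
      rw [continuousOn_iff_isClosed]
      intro t ht
      refine ⟨C.domRestrict g '' (Subtype.val ⁻¹' t), hemb.isClosedMap _
        (ht.preimage continuous_subtype_val), ?_⟩
      ext x
      constructor
      · rintro ⟨hx1, c, hc, rfl⟩
        refine ⟨⟨⟨c, hc⟩, ?_, rfl⟩, ⟨c, hc, rfl⟩⟩
        have : ψ (g c) ∈ t := hx1
        rwa [hψg c hc] at this
      · rintro ⟨⟨c, hc, rfl⟩, hx2⟩
        refine ⟨?_, hx2⟩
        show ψ (g c.1) ∈ t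
        rw [hψg c.1 c.2]
        exact hc
    have hψinj : Set.InjOn ψ (g '' C) := by
      rintro _ ⟨a, ha, rfl⟩ _ ⟨b, hb, rfl⟩ hab
      rw [hψg a ha, hψg b hb] at hab
      rw [hab]
    have hItend : Tendsto I (nhdsWithin (0, y) (Tcone r ×ˢ Set.univ)) (nhdsWithin z S) := by
      apply tendsto_nhdsWithin_of_tendsto_nhds_of_eventually_within
      · have := hIc (0, y) ⟨zero_mem_Tcone r, trivial⟩
        rw [ContinuousWithinAt, hIz] at this
        exact this
      · filter_upwards [self_mem_nhdsWithin] with p hp using hUS (hIU p hp)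
    set θ : ℝ → ℝ × ℝ := fun t => (|t|, max (-t) 0) with hθ
    have hθc : Continuous θ := by
      apply Continuous.prodMk <;> fun_prop
    have hθT : ∀ t, |t| < 1 → θ t ∈ Tcone r := by
      intro t ht
      rcases le_total 0 t with h0 | h0
      · have := mem_Tcone (r := r) (k := 0) (by omega) (abs_nonneg t) ht
        simpa [hθ, max_eq_right (by linarith : -t ≤ 0)] using this
      · have := mem_Tcone (r := r) (k := 1) (by omega) (abs_nonneg t) ht
        simpa [hθ, max_eq_left (by linarith : 0 ≤ -t), abs_of_nonpos h0] using this
    have hθinj : Function.Injective θ := by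
      intro a b hab
      simp only [hθ, Prod.mk.injEq] at hab
      obtain ⟨h1, h2⟩ := hab
      rcases le_total 0 a with ha | ha <;> rcases le_total 0 b with hb | hb
      · rwa [abs_of_nonneg ha, abs_of_nonneg hb] at h1
      · rw [max_eq_right (by linarith), max_eq_left (by linarith)] at h2
        rw [abs_of_nonneg ha, abs_of_nonpos hb] at h1
        linarith
      · rw [max_eq_left (by linarith), max_eq_right (by linarith)] at h2
        rw [abs_of_nonpos ha, abs_of_nonneg hb] at h1
        linarith
      · rw [abs_of_nonpos ha, abs_of_nonpos hb] at h1
        linarith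
    set Θ : ℝ × Euc (n - 1) → (ℝ × ℝ) × Euc (n - 1) := fun p => (θ p.1, p.2) with hΘ
    have hΘc : Continuous Θ := by
      rw [hΘ]; fun_prop
    have hΘ0 : Θ (0, y) = (0, y) := by
      simp only [hΘ, hθ]; simp
    have hball : ∀ᶠ p : ℝ × Euc (n - 1) in nhds (0, y), |p.1| < 1 := by
      have : Continuous fun p : ℝ × Euc (n - 1) => |p.1| := by fun_prop
      exact this.continuousAt.eventually_lt continuousAt_const (by simp)
    have hΘt : Tendsto Θ (nhds (0, y)) (nhdsWithin (0, y) (Tcone r ×ˢ Set.univ)) := by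
      apply tendsto_nhdsWithin_of_tendsto_nhds_of_eventually_within
      · have := hΘc.tendsto (0, y)
        rwa [hΘ0] at this
      · filter_upwards [hball] with p hp using ⟨hθT _ hp, trivial⟩
    set V : Set (ℝ × Euc (n - 1)) := {p | |p.1| < 1 ∧ I (Θ p) ∈ g '' C} with hV
    have hVn : V ∈ nhds (0, y) := by
      filter_upwards [hball, (hItend.comp hΘt) hgn] with p h1 h2 using ⟨h1, h2⟩
    have hVT : ∀ p ∈ V, Θ p ∈ Tcone r ×ˢ (Set.univ : Set (Euc (n - 1))) := fun p hp => ⟨hθT _ hp.1, trivial⟩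
    have hiod := invariance_of_domain rfl (fun p => ψ (I (Θ p))) (0, y) V hVn
      (hψc.comp (hIc.comp hΘc.continuousOn hVT) (fun p hp => hp.2))
      (by
        intro p hp q hq hpq
        have h1 := hψinj hp.2 hq.2 hpq
        have h2 := hIinj (hVT p hp) (hVT q hq) h1
        simp only [hΘ, Prod.mk.injEq] at h2
        exact Prod.ext (hθinj h2.1) h2.2)
    have hψz : ψ (I (Θ (0, y))) = 0 := by
      rw [hΘ0, hIz, ← hg0]; exact hψg 0 h0C
    simp only [hψz] at hiod
    set β : ℝ → (ℝ × ℝ) × Euc (n - 1) := fun t => ((t, t * (2:ℕ)), y) with hβ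
    have hβt : Tendsto β (nhdsWithin 0 (Set.Ioi 0))
        (nhdsWithin (0, y) (Tcone r ×ˢ Set.univ)) := by
      apply tendsto_nhdsWithin_of_tendsto_nhds_of_eventually_within
      · apply tendsto_nhdsWithin_of_tendsto_nhds
        have hc : Continuous β := by rw [hβ]; fun_prop
        have := hc.tendsto 0
        have h0 : β 0 = (0, y) := by simp [hβ]
        rwa [h0] at this
      · have h1 : Set.Ioo (0:ℝ) 1 ∈ nhdsWithin (0:ℝ) (Set.Ioi 0) := Ioo_mem_nhdsGT one_pos
        filter_upwards [h1] with t ht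
        exact ⟨mem_Tcone (by omega) ht.1.le ht.2, trivial⟩
    have hβC : ∀ᶠ t in nhdsWithin (0:ℝ) (Set.Ioi 0), I (β t) ∈ g '' C := (hItend.comp hβt) hgn
    have hψt : Tendsto (fun t => ψ (I (β t))) (nhdsWithin 0 (Set.Ioi 0)) (nhds 0) := by
      have h1 : Tendsto ψ (nhdsWithin z (g '' C)) (nhds 0) := by
        have := hψc z ⟨0, h0C, hg0⟩
        have h2 : ψ z = 0 := by rw [← hg0]; exact hψg 0 h0C
        rwa [ContinuousWithinAt, h2] at this
      apply h1.comp
      apply tendsto_nhdsWithin_of_tendsto_nhds_of_eventually_within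
      · exact (hItend.comp hβt).mono_right nhdsWithin_le_nhds
      · exact hβC
    have h1 : Set.Ioo (0:ℝ) 1 ∈ nhdsWithin (0:ℝ) (Set.Ioi 0) := Ioo_mem_nhdsGT one_pos
    have hev : ∀ᶠ t in nhdsWithin (0:ℝ) (Set.Ioi 0),
        ψ (I (β t)) ∈ (fun p => ψ (I (Θ p))) '' V := hψt.eventually hiod
    obtain ⟨t, ⟨p, hp, hpt⟩, htC, ht0, ht1⟩ := (hev.and (hβC.and h1)).exists
    have h2 := hψinj hp.2 htC hpt
    have h3 := hIinj (hVT p hp) (show β t ∈ Tcone r ×ˢ (Set.univ : Set (Euc (n - 1))) from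
      ⟨mem_Tcone (by omega) ht0.le ht1, trivial⟩) h2
    simp only [hΘ, hβ, hθ, Prod.mk.injEq] at h3
    obtain ⟨⟨h4, h5⟩, -⟩ := h3
    push_cast at h5
    rcases le_total 0 p.1 with ha | ha
    · rw [max_eq_right (by linarith)] at h5
      linarith
    · rw [max_eq_left (by linarith)] at h5
      rw [abs_of_nonpos ha] at h4
      linarith

end Cone

section Bary

/-- a family of barycentric coordinate functions on the whole space -/
structure IsBary (s : Finset (Euc N)) (lam : Euc N → Euc N →ᵃ[ℝ] ℝ) : Prop where
  delta : ∀ v ∈ s, ∀ w ∈ s, lam v w = if w = v then 1 else 0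
  sum_one : ∀ y ∈ affineSpan ℝ (s : Set (Euc N)), ∑ v ∈ s, lam v y = 1
  sum_smul : ∀ y ∈ affineSpan ℝ (s : Set (Euc N)), ∑ v ∈ s, lam v y • v = y
  orth : ∀ v ∈ s, ∀ w ∈ (vectorSpan ℝ (s : Set (Euc N)))ᗮ, ∀ y, lam v (y + w) = lam v y

theorem exists_bary (s : Finset (Euc N)) (hs : s.Nonempty)
    (hi : AffineIndependent ℝ ((↑) : s → Euc N)) :
    ∃ lam : Euc N → Euc N →ᵃ[ℝ] ℝ, IsBary s lam := by
  obtain ⟨t, hst, hti, htt⟩ := exists_subset_affineIndependent_affineSpan_eq_top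
    (k := ℝ) (V := Euc N) (P := Euc N) (s := (s : Set (Euc N))) hi
  obtain ⟨v0, hv0⟩ := hs
  let b : AffineBasis t ℝ (Euc N) := ⟨fun x => (x : Euc N), hti, by simpa using htt⟩
  set D := vectorSpan ℝ (s : Set (Euc N)) with hD
  let P : Euc N →ₗ[ℝ] Euc N := D.starProjection.toLinearMap
  have hPD : ∀ d ∈ D, P d = d := fun d hd => Submodule.starProjection_eq_self_iff.2 hd
  have hPo : ∀ d ∈ Dᗮ, P d = 0 := fun d hd =>
    (Submodule.starProjection_apply_eq_zero_iff D).2 hd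
  let q : Euc N →ᵃ[ℝ] Euc N := P.toAffineMap + AffineMap.const ℝ (Euc N) (v0 - P v0)
  have hq : ∀ y, q y = P y + (v0 - P v0) := fun y => rfl
  have hqs : ∀ y ∈ affineSpan ℝ (s : Set (Euc N)), q y = y := by
    intro y hy
    have : y - v0 ∈ D := by
      rw [hD, ← direction_affineSpan]
      exact AffineSubspace.vsub_mem_direction hy (subset_affineSpan ℝ _ hv0)
    have h2 := hPD _ this
    rw [map_sub] at h2
    rw [hq]
    rw [sub_eq_sub_iff_add_eq_add] at h2
    rw [← add_sub_assoc, h2]; simp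
  let lam : Euc N → Euc N →ᵃ[ℝ] ℝ := fun v =>
    if h : v ∈ t then (b.coord ⟨v, h⟩).comp q else 0
  have hlam : ∀ v (h : v ∈ t) y, lam v y = b.coord ⟨v, h⟩ (q y) := by
    intro v h y; simp only [lam, dif_pos h]; rfl
  have hdelta : ∀ v ∈ s, ∀ w ∈ s, lam v w = if w = v then 1 else 0 := by
    intro v hv w hw
    rw [hlam v (hst hv), hqs w (subset_affineSpan ℝ _ hw)]
    have := b.coord_apply ⟨v, hst hv⟩ ⟨w, hst hw⟩
    have hb : b ⟨w, hst hw⟩ = w := rfl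
    rw [hb] at this
    rw [this]
    by_cases h : w = v
    · subst h; simp
    · rw [if_neg h, if_neg]
      intro h'; exact h (Subtype.ext_iff.1 h').symm
  refine ⟨lam, hdelta, ?_, ?_, ?_⟩
  · intro y hy
    refine affineSpan_induction hy ?_ ?_
    · intro x hx
      rw [Finset.sum_congr rfl (fun v hv => hdelta v hv x hx)]
      simp [show x ∈ s from hx]
    · intro c u v w hu hv hw
      simp only [vsub_eq_sub, vadd_eq_add]
      have : ∀ i, lam i (c • (u - v) + w) = c * (lam i u - lam i v) + lam i w := by
        intro i
        have := (lam i).map_vadd w (c • (u - v))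
        rw [vadd_eq_add] at this
        rw [this, map_smul, ← vsub_eq_sub u v, (lam i).linearMap_vsub]
        simp
      simp only [this, Finset.sum_add_distrib, ← Finset.mul_sum, Finset.sum_sub_distrib, hu, hv, hw]
      ring
  · intro y hy
    refine affineSpan_induction hy ?_ ?_
    · intro x hx
      rw [Finset.sum_congr rfl (fun v hv => by rw [hdelta v hv x hx])]
      simp [show x ∈ s from hx]
    · intro c u v w hu hv hw
      simp only [vsub_eq_sub, vadd_eq_add]
      have : ∀ i, lam i (c • (u - v) + w) = c * (lam i u - lam i v) + lam i w := by
        intro i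
        have := (lam i).map_vadd w (c • (u - v))
        rw [vadd_eq_add] at this
        rw [this, map_smul, ← vsub_eq_sub u v, (lam i).linearMap_vsub]
        simp
      simp only [this, Finset.sum_add_distrib, add_smul, mul_smul, ← Finset.smul_sum,
        sub_smul, Finset.sum_sub_distrib, hu, hv, hw]
  · intro v hv w hw y
    rw [hlam v (hst hv), hlam v (hst hv), hq, hq, map_add P, hPo w hw, add_zero]

variable {s : Finset (Euc N)} {lam : Euc N → Euc N →ᵃ[ℝ] ℝ}

theorem IsBary.continuous (lam : Euc N → Euc N →ᵃ[ℝ] ℝ) (v : Euc N) : Continuous (lam v) :=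
  (lam v).continuous_of_finiteDimensional

theorem IsBary.hull (h : IsBary s lam) (y : Euc N) :
    y ∈ convexHull ℝ (s : Set (Euc N)) ↔
      y ∈ affineSpan ℝ (s : Set (Euc N)) ∧ ∀ v ∈ s, 0 ≤ lam v y := by
  constructor
  · intro hy
    refine ⟨convexHull_subset_affineSpan _ hy, fun v hv => ?_⟩
    have : (s : Set (Euc N)) ⊆ (lam v) ⁻¹' (Set.Ici 0) := by
      intro w hw
      simp only [Set.mem_preimage, Set.mem_Ici, h.delta v hv w hw]
      split_ifs <;> norm_num
    exact convexHull_min this ((convex_Ici (0 : ℝ)).affine_preimage (lam v)) hy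
  · rintro ⟨hy, hn⟩
    rw [Finset.mem_convexHull']
    exact ⟨fun v => lam v y, hn, h.sum_one y hy, h.sum_smul y hy⟩

theorem IsBary.cyl (h : IsBary s lam) (hs : s.Nonempty) :
    {y : Euc N | ∃ c ∈ convexHull ℝ (s : Set (Euc N)),
        ∃ w ∈ (vectorSpan ℝ (s : Set (Euc N)))ᗮ, y = c + w} = {y | ∀ v ∈ s, 0 ≤ lam v y} := by
  ext y
  constructor
  · rintro ⟨c, hc, w, hw, rfl⟩ v hv
    rw [h.orth v hv w hw]
    exact ((h.hull c).1 hc).2 v hv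
  · intro hy
    obtain ⟨v0, hv0⟩ := hs
    set D := vectorSpan ℝ (s : Set (Euc N)) with hD
    set c := v0 + D.starProjection (y - v0) with hc
    have hw : y - c ∈ Dᗮ := by
      have := Submodule.sub_starProjection_mem_orthogonal (K := D) (y - v0)
      convert this using 1
      rw [hc]; abel
    refine ⟨c, ?_, y - c, hw, by abel⟩
    rw [h.hull]
    constructor
    · have := AffineSubspace.vadd_mem_of_mem_direction (s := affineSpan ℝ (s : Set (Euc N)))
        (v := D.starProjection (y - v0)) (p := v0)
        (by rw [direction_affineSpan]; exact Submodule.starProjection_apply_mem D _) (subset_affineSpan ℝ _ hv0)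
      rw [hc, add_comm]; exact this
    · intro v hv
      rw [← h.orth v hv _ hw]
      convert hy v hv using 2
      abel

theorem IsBary.hull_erase (h : IsBary s lam) {v y : Euc N} (hv : v ∈ s)
    (hy : y ∈ convexHull ℝ (s : Set (Euc N))) (h0 : lam v y = 0) :
    y ∈ convexHull ℝ ((s.erase v : Finset (Euc N)) : Set (Euc N)) := by
  have h1 := (h.hull y).1 hy
  rw [Finset.mem_convexHull']
  refine ⟨fun w => lam w y, fun w hw => h1.2 w (Finset.mem_of_mem_erase hw), ?_, ?_⟩
  · rw [← h.sum_one y h1.1, ← Finset.add_sum_erase _ _ hv, h0, zero_add]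
  · conv_rhs => rw [← h.sum_smul y h1.1, ← Finset.add_sum_erase _ _ hv, h0, zero_smul, zero_add]

theorem IsBary.add_dir (h : IsBary s lam) {z : Euc N}
    (hz : z ∈ affineSpan ℝ (s : Set (Euc N))) (hpos : ∀ v ∈ s, 0 < lam v z) :
    ∃ ε > 0, ∀ d ∈ vectorSpan ℝ (s : Set (Euc N)), ‖d‖ < ε →
      z + d ∈ convexHull ℝ (s : Set (Euc N)) := by
  have : ∀ᶠ d : Euc N in nhds 0, ∀ v ∈ s, 0 < lam v (z + d) := by
    rw [Filter.eventually_all_finset]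
    intro v hv
    have hc : Continuous fun d : Euc N => lam v (z + d) :=
      (IsBary.continuous lam v).comp (continuous_const.add continuous_id)
    exact hc.continuousAt.eventually (by simpa using lt_mem_nhds (hpos v hv))
  obtain ⟨ε, hε, hb⟩ := Metric.eventually_nhds_iff.1 this
  refine ⟨ε, hε, fun d hd hdε => ?_⟩
  rw [h.hull]
  refine ⟨?_, fun v hv => (hb (by simpa using hdε) v hv).le⟩
  rw [add_comm]
  exact AffineSubspace.vadd_mem_of_mem_direction (by rw [direction_affineSpan]; exact hd) hz

end Bary

section Baire

theorem finite_baire {X ι : Type*} [TopologicalSpace X] (F : Finset ι) (A : ι → Set X)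
    (hA : ∀ i ∈ F, IsClosed (A i)) (hE : ∀ i ∈ F, interior (A i) = ∅) :
    interior (⋃ i ∈ F, A i) = ∅ := by
  induction F using Finset.induction_on with
  | empty => simp
  | insert a F ha ih =>
    rw [Finset.set_biUnion_insert]
    rw [interior_union_isClosed_of_interior_empty (hA a (Finset.mem_insert_self _ _))]
    · exact hE a (Finset.mem_insert_self _ _)
    · exact ih (fun i hi => hA i (Finset.mem_insert_of_mem hi))
        (fun i hi => hE i (Finset.mem_insert_of_mem hi))

theorem finrank_vectorSpan_face {K : SimplicialComplex ℝ (Euc N)} {s : Finset (Euc N)}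
    (hs : s ∈ K.faces) : Module.finrank ℝ (vectorSpan ℝ (s : Set (Euc N))) + 1 = s.card := by
  have h := K.indep hs
  have hne := SimplicialComplex.nonempty_of_mem_faces hs
  have : Nonempty s := hne.to_subtype
  have := h.finrank_vectorSpan_add_one
  rw [Fintype.card_coe] at this
  have hr : Set.range (Subtype.val : s → Euc N) = (s : Set (Euc N)) := by ext y; simp
  rw [hr] at this
  exact this

theorem exists_good_point {n r : ℕ} (K : SimplicialComplex ℝ (Euc N))
    (hfin : K.faces.Finite) (x : Euc N) (hx : x ∈ K.space)
    (hc : HasConeNbhd n r K.space x) :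
    ∃ z ∈ K.space, HasConeNbhd n r K.space z ∧
      ∀ s ∈ K.faces, s.card ≤ n - 1 → z ∉ convexHull ℝ (s : Set (Euc N)) := by
  obtain ⟨U, hU, hUS, h, hh⟩ := hc
  have hxU : x ∈ U := mem_of_mem_nhdsWithin hx hU
  obtain ⟨I, hIc, hIU, hIinj, hI⟩ := homeo_total U (Tcone r) h
  obtain ⟨W, hWo, hxW, hWU⟩ := mem_nhdsWithin.1 hU
  set f : EuclideanSpace ℝ (Fin (n-1)) → Euc N := fun y => I (0, y) with hf
  have hmem : ∀ y : EuclideanSpace ℝ (Fin (n-1)), ((0 : ℝ × ℝ), y) ∈ Tcone r ×ˢ Set.univ :=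
    fun y => ⟨zero_mem_Tcone r, trivial⟩
  have hfc : Continuous f := by
    rw [← continuousOn_univ]
    exact hIc.comp (by fun_prop) (fun y _ => hmem y)
  have hfi : Function.Injective f := by
    intro y y' hyy
    have := hIinj (hmem y) (hmem y') hyy
    exact (Prod.ext_iff.1 this).2
  set V := f ⁻¹' W with hV
  have hVo : IsOpen V := hWo.preimage hfc
  have hVne : (h ⟨x, hxU⟩).2 ∈ V := by
    have h1 := hI x hxU
    rw [hh hxU] at h1
    simpa [hV, hf, h1] using hxW
  by_contra hcon
  push Not at hcon
  set F := hfin.toFinset.filter (fun s => s.card ≤ n - 1) with hF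
  have hsub : V ⊆ ⋃ s ∈ F, f ⁻¹' (convexHull ℝ (s : Set (Euc N))) := by
    intro y hy
    have hfU : f y ∈ U := hIU _ (hmem y)
    have hcz : HasConeNbhd n r K.space (f y) := by
      refine ⟨U, ?_, hUS, h, ?_⟩
      · exact mem_nhdsWithin.2 ⟨W, hWo, hy, hWU⟩
      · intro hz
        have h1 := hI (f y) hz
        have h2 := hIinj ⟨(h ⟨f y, hz⟩).1.2, trivial⟩ (hmem y) h1
        exact (Prod.ext_iff.1 h2).1
    obtain ⟨s, hs, hsc, hsz⟩ := hcon (f y) (hUS hfU) hcz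
    simp only [Set.mem_iUnion]
    exact ⟨s, by simp [hF, hs, hsc], hsz⟩
  have hne : interior (⋃ s ∈ F, f ⁻¹' (convexHull ℝ (s : Set (Euc N)))) ≠ ∅ := by
    apply Set.Nonempty.ne_empty
    exact ⟨_, interior_maximal hsub hVo hVne⟩
  apply hne
  apply finite_baire
  · intro s _
    exact (s.finite_toSet.isClosed_convexHull ℝ).preimage hfc
  · intro s hs
    by_contra hint
    obtain ⟨y0, hy0⟩ := Set.nonempty_iff_ne_empty.2 hint
    simp only [hF, Finset.mem_filter, Set.Finite.mem_toFinset] at hs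
    have hfr := finrank_vectorSpan_face hs.1
    obtain ⟨v0, hv0⟩ := SimplicialComplex.nonempty_of_mem_faces hs.1
    refine no_embed (vectorSpan ℝ (s : Set (Euc N))) (by rw [finrank_euclideanSpace_fin]; omega)
      f v0 y0 _ (mem_interior_iff_mem_nhds.1 hy0) hfc.continuousOn hfi.injOn ?_
    intro y hy
    rw [← direction_affineSpan]
    exact AffineSubspace.vsub_mem_direction (convexHull_subset_affineSpan _ hy)
      (subset_affineSpan ℝ _ hv0)

end Baire

section Charts

theorem image_mem_nhdsWithin_of_compact {E F : Type*} [NormedAddCommGroup E] [NormedSpace ℝ E]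
    [FiniteDimensional ℝ E] [TopologicalSpace F] [T2Space F] (g : E → F) (hg : Continuous g)
    (z : F) (S T : Set F) (hT : T ∈ nhdsWithin z S) (hz : ∀ v, g v = z → v = 0)
    (M ρ : ℝ) (hρ : 0 < ρ) (hTM : T ⊆ g '' Metric.closedBall 0 M) :
    g '' Metric.closedBall 0 ρ ∈ nhdsWithin z S := by
  have : ProperSpace E := FiniteDimensional.proper ℝ E
  have hC : IsCompact (Metric.closedBall (0 : E) M \ Metric.ball 0 ρ) :=
    (isCompact_closedBall _ _).diff Metric.isOpen_ball
  have hcl := (hC.image hg).isClosed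
  have hzC : z ∉ g '' (Metric.closedBall (0 : E) M \ Metric.ball 0 ρ) := by
    rintro ⟨v, hv, hvz⟩
    rw [hz v hvz] at hv
    exact hv.2 (Metric.mem_ball_self hρ)
  have hn := mem_nhdsWithin_of_mem_nhds (t := S) (hcl.isOpen_compl.mem_nhds hzC)
  filter_upwards [hT, hn] with y hy hy2
  obtain ⟨v, hv, rfl⟩ := hTM hy
  refine ⟨v, ?_, rfl⟩
  by_contra hvρ
  exact hy2 ⟨v, ⟨hv, fun h => hvρ (Metric.ball_subset_closedBall h)⟩, rfl⟩

theorem exists_min_face (K : SimplicialComplex ℝ (Euc N)) (z : Euc N) (hz : z ∈ K.space) :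
    ∃ s ∈ K.faces, z ∈ convexHull ℝ (s : Set (Euc N)) ∧
      ∀ t ∈ K.faces, z ∈ convexHull ℝ (t : Set (Euc N)) → s ⊆ t := by
  have hex : ∃ k, ∃ s ∈ K.faces, z ∈ convexHull ℝ (s : Set (Euc N)) ∧ s.card = k := by
    obtain ⟨s, hs, hsz⟩ := SimplicialComplex.mem_space_iff.1 hz
    exact ⟨_, s, hs, hsz, rfl⟩
  obtain ⟨s, hs, hsz, hsc⟩ := Nat.find_spec hex
  refine ⟨s, hs, hsz, fun t ht htz => ?_⟩
  have hi := K.inter_subset_convexHull hs ht ⟨hsz, htz⟩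
  rw [← Finset.coe_inter] at hi
  have hne : (s ∩ t).Nonempty := by
    rw [Finset.nonempty_iff_ne_empty]
    intro h0
    rw [h0] at hi
    simp at hi
  have hf := K.down_closed hs Finset.inter_subset_left hne
  have hle := Nat.find_min' hex ⟨_, hf, hi, rfl⟩
  have : s ∩ t = s := Finset.eq_of_subset_of_card_le Finset.inter_subset_left (by omega)
  rw [← this]; exact Finset.inter_subset_right

theorem near_min_face (K : SimplicialComplex ℝ (Euc N)) (hfin : K.faces.Finite) (z : Euc N)
    (s : Finset (Euc N)) (hs : ∀ t ∈ K.faces, z ∈ convexHull ℝ (t : Set (Euc N)) → s ⊆ t)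
    (T : Set (Euc N)) (hT : ∀ t ∈ K.faces, s ⊆ t → convexHull ℝ (t : Set (Euc N)) ⊆ T) :
    T ∈ nhdsWithin z K.space := by
  have : (⋃ t ∈ {t ∈ K.faces | z ∉ convexHull ℝ (t : Set (Euc N))},
      convexHull ℝ (t : Set (Euc N)))ᶜ ∈ nhds z := by
    apply IsOpen.mem_nhds
    · rw [isOpen_compl_iff]
      exact (hfin.subset (fun t ht => ht.1)).isClosed_biUnion
        (fun t _ => t.finite_toSet.isClosed_convexHull ℝ)
    · simp
  filter_upwards [mem_nhdsWithin_of_mem_nhds (t := K.space) this, self_mem_nhdsWithin] with y hy hyS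
  obtain ⟨t, ht, hyt⟩ := SimplicialComplex.mem_space_iff.1 hyS
  refine hT t ht (hs t ht ?_) hyt
  by_contra hzt
  apply hy
  simp only [Set.mem_iUnion]
  exact ⟨t, ⟨ht, hzt⟩, hyt⟩

theorem min_face_pos (K : SimplicialComplex ℝ (Euc N)) (z : Euc N) (s : Finset (Euc N))
    (hsK : s ∈ K.faces) (hsz : z ∈ convexHull ℝ (s : Set (Euc N)))
    (hs : ∀ t ∈ K.faces, z ∈ convexHull ℝ (t : Set (Euc N)) → s ⊆ t) :
    ∃ ε > 0, ∀ d ∈ vectorSpan ℝ (s : Set (Euc N)), ‖d‖ < ε →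
      z + d ∈ convexHull ℝ (s : Set (Euc N)) := by
  obtain ⟨lam, hl⟩ := exists_bary s (SimplicialComplex.nonempty_of_mem_faces hsK) (K.indep hsK)
  have h1 := (hl.hull z).1 hsz
  refine hl.add_dir h1.1 (fun v hv => lt_of_le_of_ne (h1.2 v hv) fun h0 => ?_)
  have h2 := hl.hull_erase hv hsz h0.symm
  have hne : (s.erase v).Nonempty := by
    rw [Finset.nonempty_iff_ne_empty]
    intro h0
    rw [h0] at h2
    simp at h2
  have := hs _ (K.down_closed hsK (Finset.erase_subset _ _) hne) h2 hv
  simp at this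

theorem chart_top {n r : ℕ} (hn : 1 ≤ n) (K : SimplicialComplex ℝ (Euc N))
    (hfin : K.faces.Finite) (hdim : IsNDim n K) (z : Euc N) (s : Finset (Euc N))
    (hsK : s ∈ K.faces) (hsz : z ∈ convexHull ℝ (s : Set (Euc N)))
    (hs : ∀ t ∈ K.faces, z ∈ convexHull ℝ (t : Set (Euc N)) → s ⊆ t) (hsc : s.card = n + 1)
    (hcone : HasConeNbhd n r K.space z) : r = 2 := by
  obtain ⟨ε, hε, hb⟩ := min_face_pos K z s hsK hsz hs
  set D := vectorSpan ℝ (s : Set (Euc N)) with hD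
  have hfr := finrank_vectorSpan_face hsK
  rw [← hD] at hfr
  have hfr2 : Module.finrank ℝ (ℝ × EuclideanSpace ℝ (Fin (n - 1))) = Module.finrank ℝ D := by
    rw [Module.finrank_prod, finrank_euclideanSpace_fin, Module.finrank_self]; omega
  let e : (ℝ × EuclideanSpace ℝ (Fin (n - 1))) ≃L[ℝ] D :=
    ContinuousLinearEquiv.ofFinrankEq hfr2
  let g : ℝ × EuclideanSpace ℝ (Fin (n - 1)) → Euc N := fun v => z + (e v : Euc N)
  have hgc : Continuous g := by fun_prop
  have hgi : Function.Injective g := by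
    intro v w hvw
    exact e.injective (Subtype.ext (add_left_cancel hvw))
  have hg0 : g 0 = z := by simp [g]
  have hsmall : ∀ᶠ v in nhds (0 : ℝ × EuclideanSpace ℝ (Fin (n - 1))), ‖(e v : Euc N)‖ < ε := by
    have hc : Continuous fun v => ‖(e v : Euc N)‖ := by fun_prop
    exact hc.continuousAt.eventually (p := fun x => x < ε) (by simpa using gt_mem_nhds hε)
  obtain ⟨ρ, hρ, hρb⟩ := Metric.nhds_basis_closedBall.mem_iff.1 hsmall
  have hTn : convexHull ℝ (s : Set (Euc N)) ∈ nhdsWithin z K.space := by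
    refine near_min_face K hfin z s hs _ (fun t ht hst => ?_)
    have : s = t := Finset.eq_of_subset_of_card_le hst (by rw [hsc]; exact hdim.1 t ht)
    rw [this]
  have hcpt : IsCompact (convexHull ℝ (s : Set (Euc N))) := s.finite_toSet.isCompact_convexHull ℝ
  let ψ : Euc N → ℝ × EuclideanSpace ℝ (Fin (n - 1)) := fun y =>
    e.symm (D.orthogonalProjectionOnto (y - z))
  have hψc : Continuous ψ := by fun_prop
  obtain ⟨M, hM⟩ := (hcpt.image hψc).isBounded.subset_closedBall 0
  refine cone_rank (K.convexHull_subset_space hsK hsz) g (Metric.closedBall 0 ρ)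
    (isCompact_closedBall _ _) (Metric.closedBall_mem_nhds _ hρ) hgc.continuousOn hgi.injOn hg0
    ?_ ?_ hcone
  · intro c hc
    exact K.convexHull_subset_space hsK (hb _ (e c).2 (hρb hc))
  · refine image_mem_nhdsWithin_of_compact g hgc z _ _ hTn (fun v hv => hgi (hv.trans hg0.symm))
      M ρ hρ ?_
    intro y hy
    refine ⟨ψ y, hM ⟨y, hy, rfl⟩, ?_⟩
    have hyD : y - z ∈ D := by
      rw [hD, ← direction_affineSpan]
      exact AffineSubspace.vsub_mem_direction (convexHull_subset_affineSpan _ hy)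
        (convexHull_subset_affineSpan _ hsz)
    simp only [g, ψ, ContinuousLinearEquiv.apply_symm_apply]
    rw [← Submodule.starProjection_apply, Submodule.starProjection_eq_self_iff.2 hyD]
    abel

theorem half_chart (s : Finset (Euc N)) (a : Euc N) (ha : a ∉ s)
    (hi : AffineIndependent ℝ (Subtype.val : {x // x ∈ insert a s} → Euc N)) (z : Euc N)
    (hz : z ∈ affineSpan ℝ (s : Set (Euc N))) :
    ∃ μ : Euc N → ℝ, Continuous μ ∧ (∀ y ∈ affineSpan ℝ (s : Set (Euc N)), μ y = 0) ∧
      (∀ y ∈ convexHull ℝ ((insert a s : Finset (Euc N)) : Set (Euc N)), 0 ≤ μ y ∧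
        y - z - μ y • (a - z) ∈ vectorSpan ℝ (s : Set (Euc N))) ∧
      ∀ d ∈ vectorSpan ℝ (s : Set (Euc N)), ∀ t : ℝ, μ (z + d + t • (a - z)) = t := by
  obtain ⟨lam, hl⟩ := exists_bary (insert a s) (Finset.insert_nonempty _ _) hi
  have hsp : ∀ y ∈ affineSpan ℝ (s : Set (Euc N)), lam a y = 0 := by
    intro y hy
    have hle : affineSpan ℝ (s : Set (Euc N)) ≤
        (affineSpan ℝ ({0} : Set ℝ)).comap (lam a) := by
      rw [affineSpan_le]
      intro w hw
      have := hl.delta a (Finset.mem_insert_self _ _) w (Finset.mem_insert_of_mem hw)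
      rw [if_neg (by rintro rfl; exact ha hw)] at this
      simp [this]
    simpa using hle hy
  have hform : ∀ d ∈ vectorSpan ℝ (s : Set (Euc N)), ∀ t : ℝ,
      lam a (z + d + t • (a - z)) = t := by
    intro d hd t
    have h1 : lam a (z + d) = 0 := by
      apply hsp
      rw [add_comm]
      exact AffineSubspace.vadd_mem_of_mem_direction (by rw [direction_affineSpan]; exact hd) hz
    have h2 := (lam a).map_vadd (z + d) (t • (a - z))
    rw [vadd_eq_add, add_comm] at h2
    rw [h2, map_smul, ← vsub_eq_sub a z, (lam a).linearMap_vsub, hsp z hz, h1,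
      hl.delta a (Finset.mem_insert_self _ _) a (Finset.mem_insert_self _ _)]
    simp
  refine ⟨lam a, IsBary.continuous lam a, hsp, fun y hy => ⟨?_, ?_⟩, hform⟩
  · exact ((hl.hull y).1 hy).2 a (Finset.mem_insert_self _ _)
  · have hya := ((hl.hull y).1 hy).1
    have h1 := hl.sum_one y hya
    have h2 := hl.sum_smul y hya
    rw [Finset.sum_insert ha] at h1 h2
    have h3 : y - z - lam a y • (a - z) = ∑ v ∈ s, lam v y • (v - z) := by
      simp only [smul_sub, Finset.sum_sub_distrib, ← Finset.sum_smul]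
      rw [show ∑ v ∈ s, lam v y = 1 - lam a y by linarith]
      rw [sub_smul, one_smul, eq_sub_of_add_eq' h2]
      abel
    rw [h3]
    refine Submodule.sum_mem _ fun v hv => Submodule.smul_mem _ _ ?_
    rw [← direction_affineSpan]
    exact AffineSubspace.vsub_mem_direction (subset_affineSpan ℝ _ hv) hz

end Charts

section Chartsb

theorem link_two {n : ℕ} (K : SimplicialComplex ℝ (Euc N))
    (hdim : IsNDim n K) (s : Finset (Euc N)) (hsc : s.card = n)
    (hl : eulerChar (linkFaces K s) = 2) :
    ∃ a b, a ≠ b ∧ a ∉ s ∧ b ∉ s ∧ insert a s ∈ K.faces ∧ insert b s ∈ K.faces ∧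
      ∀ t ∈ K.faces, s ⊆ t → t = s ∨ t = insert a s ∨ t = insert b s := by
  have hcard : ∀ ω ∈ linkFaces K s, ω.card = 1 := by
    rintro ω ⟨h1, h2, h3⟩
    have h4 := hdim.1 _ h3
    rw [Finset.card_union_of_disjoint h2] at h4
    have h5 := Finset.card_pos.2 (SimplicialComplex.nonempty_of_mem_faces h1)
    omega
  have h0 : ∀ k : ℕ, k ≠ 0 → (-1 : ℤ) ^ k * fcount (linkFaces K s) k = 0 := by
    intro k hk
    have : {ω ∈ linkFaces K s | ω.card = k + 1} = ∅ := by
      ext ω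
      simp only [Set.mem_ofPred_eq, Set.mem_empty_iff_false, iff_false, not_and]
      intro hω hc
      have := hcard ω hω
      omega
    simp [fcount, this]
  rw [eulerChar, finsum_eq_single _ 0 h0] at hl
  have hl2 : {ω ∈ linkFaces K s | ω.card = 0 + 1}.ncard = 2 := by
    have : ((fcount (linkFaces K s) 0 : ℕ) : ℤ) = 2 := by simpa using hl
    exact_mod_cast this
  obtain ⟨ω1, ω2, hne, heq⟩ := Set.ncard_eq_two.1 hl2
  have m1 : ω1 ∈ {ω ∈ linkFaces K s | ω.card = 0 + 1} := by rw [heq]; simp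
  have m2 : ω2 ∈ {ω ∈ linkFaces K s | ω.card = 0 + 1} := by rw [heq]; simp
  obtain ⟨a, rfl⟩ := Finset.card_eq_one.1 m1.2
  obtain ⟨b, rfl⟩ := Finset.card_eq_one.1 m2.2
  refine ⟨a, b, by rintro rfl; exact hne rfl, by simpa using m1.1.2.1, by simpa using m2.1.2.1,
    ?_, ?_, ?_⟩
  · rw [Finset.insert_eq, Finset.union_comm]; exact m1.1.2.2
  · rw [Finset.insert_eq, Finset.union_comm]; exact m2.1.2.2
  · intro t ht hst
    by_cases hts : t = s
    · exact Or.inl hts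
    right
    have hne : (t \ s).Nonempty := by
      rw [Finset.sdiff_nonempty]
      exact fun h => hts (Finset.Subset.antisymm h hst)
    have hmem : t \ s ∈ linkFaces K s := by
      refine ⟨K.down_closed ht Finset.sdiff_subset hne, Finset.disjoint_sdiff, ?_⟩
      rw [Finset.union_sdiff_of_subset hst]; exact ht
    have : t \ s ∈ {ω ∈ linkFaces K s | ω.card = 0 + 1} := ⟨hmem, hcard _ hmem⟩
    rw [heq] at this
    have ht' : t = s ∪ t \ s := (Finset.union_sdiff_of_subset hst).symm
    rcases this with h | h
    · left; rw [ht', h, Finset.insert_eq, Finset.union_comm]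
    · right
      rw [Set.mem_singleton_iff] at h
      rw [ht', h, Finset.insert_eq, Finset.union_comm]

theorem chart_codim {n r : ℕ} (K : SimplicialComplex ℝ (Euc N))
    (hfin : K.faces.Finite) (hdim : IsNDim n K) (z : Euc N) (s : Finset (Euc N))
    (hsK : s ∈ K.faces) (hsz : z ∈ convexHull ℝ (s : Set (Euc N)))
    (hs : ∀ t ∈ K.faces, z ∈ convexHull ℝ (t : Set (Euc N)) → s ⊆ t) (hsc : s.card = n)
    (hl : eulerChar (linkFaces K s) = 2)
    (hcone : HasConeNbhd n r K.space z) : r = 2 := by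
  obtain ⟨ε, hε, hb⟩ := min_face_pos K z s hsK hsz hs
  obtain ⟨a, b, hab, has, hbs, haK, hbK, hst⟩ := link_two K hdim s hsc hl
  have hza := convexHull_subset_affineSpan _ hsz
  obtain ⟨μ, hμc, hμ0, hμh, hμf⟩ := half_chart s a has (K.indep haK) z hza
  obtain ⟨ν, hνc, hν0, hνh, hνf⟩ := half_chart s b hbs (K.indep hbK) z hza
  set D := vectorSpan ℝ (s : Set (Euc N)) with hD
  have hfr := finrank_vectorSpan_face hsK
  rw [← hD] at hfr
  have hfr2 : Module.finrank ℝ (EuclideanSpace ℝ (Fin (n - 1))) = Module.finrank ℝ D := by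
    rw [finrank_euclideanSpace_fin]; omega
  let e : (EuclideanSpace ℝ (Fin (n - 1))) ≃L[ℝ] D :=
    ContinuousLinearEquiv.ofFinrankEq hfr2
  let g : ℝ × EuclideanSpace ℝ (Fin (n - 1)) → Euc N := fun v =>
    z + (e v.2 : Euc N) + max v.1 0 • (a - z) + max (-v.1) 0 • (b - z)
  have hgp : ∀ v, 0 ≤ v.1 → g v = z + (e v.2 : Euc N) + v.1 • (a - z) := by
    intro v hv
    simp [g, max_eq_left hv, max_eq_right (neg_nonpos.2 hv)]
  have hgm : ∀ v, v.1 ≤ 0 → g v = z + (e v.2 : Euc N) + (-v.1) • (b - z) := by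
    intro v hv
    simp only [g, max_eq_right hv, max_eq_left (neg_nonneg.2 hv), zero_smul, add_zero]
  have hgc : Continuous g := by fun_prop
  have hg0 : g 0 = z := by simp [g]
  have hgz : ∀ v, g v = z → v = 0 := by
    intro v hv
    have hv1 : v.1 = 0 := by
      rcases le_total 0 v.1 with h | h
      · rw [hgp v h] at hv
        rw [← hμf (e v.2) (e v.2).2 v.1, hv, hμ0 z hza]
      · rw [hgm v h] at hv
        have := hνf (e v.2) (e v.2).2 (-v.1)
        rw [hv, hν0 z hza] at this
        linarith
    have hv2 : v.2 = 0 := by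
      rw [hgp v hv1.ge, hv1, zero_smul, add_zero, add_eq_left] at hv
      exact (map_eq_zero_iff e e.injective).1 (Subtype.ext hv)
    exact Prod.ext hv1 hv2
  have hsmall : ∀ᶠ v in nhds (0 : ℝ × EuclideanSpace ℝ (Fin (n - 1))),
      ‖(e v.2 : Euc N)‖ < ε / 2 ∧ |v.1| < 1 / 2 := by
    have hc : Continuous fun v : ℝ × EuclideanSpace ℝ (Fin (n - 1)) => ‖(e v.2 : Euc N)‖ := by
      fun_prop
    have hc2 : Continuous fun v : ℝ × EuclideanSpace ℝ (Fin (n - 1)) => |v.1| := by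
      fun_prop
    refine Filter.Eventually.and ?_ ?_
    · exact hc.continuousAt.eventually (p := fun x => x < ε / 2)
        (by simpa using gt_mem_nhds (half_pos hε))
    · exact hc2.continuousAt.eventually (p := fun x => x < 1 / 2)
        (by simpa using gt_mem_nhds (by norm_num))
  obtain ⟨ρ, hρ, hρb⟩ := Metric.nhds_basis_closedBall.mem_iff.1 hsmall
  have hsub : ∀ c, convexHull ℝ (s : Set (Euc N)) ⊆
      convexHull ℝ ((insert c s : Finset (Euc N)) : Set (Euc N)) := fun c =>
    convexHull_mono (by simp)
  have hland : ∀ (c : Euc N) (d : Euc N) (t : ℝ), d ∈ D → ‖d‖ < ε / 2 → 0 ≤ t → t < 1 / 2 →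
      z + d + t • (c - z) ∈ convexHull ℝ ((insert c s : Finset (Euc N)) : Set (Euc N)) := by
    intro c d t hd hdε ht ht2
    have hpos : 0 < 1 - t := by linarith
    have h1 : z + (1 - t)⁻¹ • d ∈ convexHull ℝ (s : Set (Euc N)) := by
      apply hb _ (Submodule.smul_mem _ _ hd)
      rw [norm_smul, Real.norm_of_nonneg (inv_nonneg.2 hpos.le), inv_mul_lt_iff₀ hpos]
      nlinarith
    have h2 : c ∈ convexHull ℝ ((insert c s : Finset (Euc N)) : Set (Euc N)) :=
      subset_convexHull ℝ _ (by simp)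
    have h3 := convex_convexHull ℝ ((insert c s : Finset (Euc N)) : Set (Euc N))
      (hsub c h1) h2 hpos.le ht (by ring)
    convert h3 using 1
    rw [smul_add, smul_smul, mul_inv_cancel₀ hpos.ne', one_smul, sub_smul, one_smul, smul_sub]
    abel
  have hla : ∀ v ∈ Metric.closedBall (0 : ℝ × EuclideanSpace ℝ (Fin (n - 1))) ρ, 0 ≤ v.1 →
      g v ∈ convexHull ℝ ((insert a s : Finset (Euc N)) : Set (Euc N)) := by
    intro v hv h0
    have h1 := hρb hv
    rw [hgp v h0]
    exact hland a _ _ (e v.2).2 h1.1 h0 (lt_of_le_of_lt (le_abs_self _) h1.2)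
  have hlb : ∀ v ∈ Metric.closedBall (0 : ℝ × EuclideanSpace ℝ (Fin (n - 1))) ρ, v.1 ≤ 0 →
      g v ∈ convexHull ℝ ((insert b s : Finset (Euc N)) : Set (Euc N)) := by
    intro v hv h0
    have h1 := hρb hv
    rw [hgm v h0]
    exact hland b _ _ (e v.2).2 h1.1 (by linarith) (lt_of_le_of_lt (neg_le_abs _) h1.2)
  have hmix : ∀ v ∈ Metric.closedBall (0 : ℝ × EuclideanSpace ℝ (Fin (n - 1))) ρ,
      ∀ w ∈ Metric.closedBall (0 : ℝ × EuclideanSpace ℝ (Fin (n - 1))) ρ,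
      0 ≤ v.1 → w.1 ≤ 0 → g v = g w → v = w := by
    intro v hv w hw hv0 hw0 hvw
    have h1 := K.inter_subset_convexHull haK hbK ⟨hla v hv hv0, hvw ▸ hlb w hw hw0⟩
    have hint : ((insert a s : Finset (Euc N)) : Set (Euc N)) ∩ (insert b s : Finset (Euc N)) =
        (s : Set (Euc N)) := by
      ext x
      simp only [Finset.coe_insert, Set.mem_inter_iff, Set.mem_insert_iff, Finset.mem_coe]
      constructor
      · rintro ⟨rfl | h, rfl | h'⟩
        · exact absurd rfl hab
        · exact h'
        · exact h
        · exact h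
      · exact fun h => ⟨Or.inr h, Or.inr h⟩
    rw [hint] at h1
    have h2 := convexHull_subset_affineSpan _ h1
    have hv1 : v.1 = 0 := by
      rw [← hμf (e v.2) (e v.2).2 v.1, ← hgp v hv0, hμ0 _ h2]
    have hw1 : w.1 = 0 := by
      have := hνf (e w.2) (e w.2).2 (-w.1)
      rw [← hgm w hw0, ← hvw, hν0 _ h2] at this
      linarith
    rw [hgp v hv0, hgm w hw0, hv1, hw1] at hvw
    simp only [zero_smul, neg_zero, add_zero, add_right_inj] at hvw
    exact Prod.ext (hv1.trans hw1.symm) (e.injective (Subtype.ext hvw))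
  have hgi : Set.InjOn g (Metric.closedBall 0 ρ) := by
    intro v hv w hw hvw
    rcases le_total 0 v.1 with h | h <;> rcases le_total 0 w.1 with h' | h'
    · have h1 : v.1 = w.1 := by
        rw [← hμf (e v.2) (e v.2).2 v.1, ← hμf (e w.2) (e w.2).2 w.1, ← hgp v h, ← hgp w h', hvw]
      rw [hgp v h, hgp w h', h1] at hvw
      simp only [add_left_inj, add_right_inj] at hvw
      exact Prod.ext h1 (e.injective (Subtype.ext hvw))
    · exact hmix v hv w hw h h' hvw
    · exact (hmix w hw v hv h' h hvw.symm).symm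
    · have h1 : -v.1 = -w.1 := by
        rw [← hνf (e v.2) (e v.2).2 (-v.1), ← hνf (e w.2) (e w.2).2 (-w.1), ← hgm v h, ← hgm w h',
          hvw]
      rw [hgm v h, hgm w h', h1] at hvw
      simp only [add_left_inj, add_right_inj] at hvw
      exact Prod.ext (neg_injective h1) (e.injective (Subtype.ext hvw))
  set Ta := convexHull ℝ ((insert a s : Finset (Euc N)) : Set (Euc N)) with hTa
  set Tb := convexHull ℝ ((insert b s : Finset (Euc N)) : Set (Euc N)) with hTb
  have hTn : Ta ∪ Tb ∈ nhdsWithin z K.space := by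
    refine near_min_face K hfin z s hs _ (fun t ht hst' => ?_)
    rcases hst t ht hst' with rfl | rfl | rfl
    · exact (hsub a).trans Set.subset_union_left
    · exact Set.subset_union_left
    · exact Set.subset_union_right
  have hca : IsCompact Ta := (Finset.finite_toSet _).isCompact_convexHull ℝ
  have hcb : IsCompact Tb := (Finset.finite_toSet _).isCompact_convexHull ℝ
  let ψa : Euc N → ℝ × EuclideanSpace ℝ (Fin (n - 1)) := fun y =>
    (μ y, e.symm (D.orthogonalProjectionOnto (y - z - μ y • (a - z))))
  let ψb : Euc N → ℝ × EuclideanSpace ℝ (Fin (n - 1)) := fun y =>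
    (- ν y, e.symm (D.orthogonalProjectionOnto (y - z - ν y • (b - z))))
  have hψa : Continuous ψa := by fun_prop
  have hψb : Continuous ψb := by fun_prop
  obtain ⟨M, hM⟩ := ((hca.image hψa).union (hcb.image hψb)).isBounded.subset_closedBall 0
  refine cone_rank (K.convexHull_subset_space hsK hsz) g (Metric.closedBall 0 ρ)
    (isCompact_closedBall _ _) (Metric.closedBall_mem_nhds _ hρ) hgc.continuousOn hgi hg0
    ?_ ?_ hcone
  · intro c hc
    rcases le_total 0 c.1 with h | h
    · exact K.convexHull_subset_space haK (hla c hc h)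
    · exact K.convexHull_subset_space hbK (hlb c hc h)
  · refine image_mem_nhdsWithin_of_compact g hgc z _ _ hTn hgz M ρ hρ ?_
    rintro y (hy | hy)
    · refine ⟨ψa y, hM (Or.inl ⟨y, hy, rfl⟩), ?_⟩
      rw [hgp _ (hμh y hy).1]
      simp only [ψa, ContinuousLinearEquiv.apply_symm_apply]
      rw [← Submodule.starProjection_apply, Submodule.starProjection_eq_self_iff.2 (hμh y hy).2]
      abel
    · refine ⟨ψb y, hM (Or.inr ⟨y, hy, rfl⟩), ?_⟩
      rw [hgm _ (neg_nonpos.2 (hνh y hy).1)]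
      simp only [ψb, ContinuousLinearEquiv.apply_symm_apply]
      rw [← Submodule.starProjection_apply, Submodule.starProjection_eq_self_iff.2 (hνh y hy).2]
      rw [neg_neg]
      abel

theorem strRank_eq_one {n : ℕ} (hn : 1 ≤ n) (K : SimplicialComplex ℝ (Euc N))
    (hfin : K.faces.Finite) (hdim : IsNDim n K)
    (hl : ∀ s ∈ K.faces, s.card = n → eulerChar (linkFaces K s) = 2)
    (η : Finset (Euc N)) (hη : η ∈ K.faces) : strRank n K η = 1 := by
  rw [strRank, dif_neg]
  rintro ⟨r, hr, hsub⟩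
  obtain ⟨x, hx⟩ : (openSimplex η).Nonempty := by
    apply Set.Nonempty.intrinsicInterior (convex_convexHull ℝ _)
    simpa using SimplicialComplex.nonempty_of_mem_faces hη
  obtain ⟨hxK, hcone⟩ := hsub hx
  obtain ⟨z, hz, hzc, hzs⟩ := exists_good_point K hfin x hxK hcone
  obtain ⟨s, hsK, hsz, hs⟩ := exists_min_face K z hz
  have h1 := hdim.1 s hsK
  have h2 : ¬ s.card ≤ n - 1 := fun h => hzs s hsK h hsz
  have h3 : s.card = n ∨ s.card = n + 1 := by omega
  apply hr
  rcases h3 with h | h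
  · exact chart_codim K hfin hdim z s hsK hsz hs h (hl s hsK h) hzc
  · exact chart_top hn K hfin hdim z s hsK hsz hs h hzc

end Chartsb

section Angles

/-- the part of the unit ball where the linear forms in `T` are nonnegative -/
def coneBall (l : Euc N → Euc N →ₗ[ℝ] ℝ) (T : Finset (Euc N)) : Set (Euc N) :=
  Metric.ball 0 1 ∩ {u | ∀ v ∈ T, 0 ≤ l v u}

open Pointwise in
theorem volume_cone_scale (l : Euc N → Euc N →ₗ[ℝ] ℝ) (T : Finset (Euc N)) (c : Euc N) {ε : ℝ}
    (hε : 0 < ε) :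
    (volume (Metric.ball c ε ∩ {y | ∀ v ∈ T, 0 ≤ l v (y - c)})).toReal =
      ε ^ N * (volume (coneBall l T)).toReal := by
  have h1 : Metric.ball c ε ∩ {y | ∀ v ∈ T, 0 ≤ l v (y - c)} =
      (fun y => -c + y) ⁻¹' (ε • coneBall l T) := by
    ext y
    simp only [Set.mem_inter_iff, Set.mem_preimage, Set.mem_smul_set_iff_inv_smul_mem₀ hε.ne',
      coneBall, Metric.mem_ball, Set.mem_ofPred_eq, dist_zero_right, map_smul, smul_eq_mul]
    rw [neg_add_eq_sub, norm_smul, norm_inv, Real.norm_of_nonneg hε.le, inv_mul_lt_iff₀ hε, mul_one,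
      dist_eq_norm]
    refine and_congr Iff.rfl (forall₂_congr fun v _ => ?_)
    rw [mul_nonneg_iff_of_pos_left (inv_pos.2 hε)]
  rw [h1, measure_preimage_add, Measure.addHaar_smul, ENNReal.toReal_mul,
    ENNReal.toReal_ofReal (abs_nonneg _), finrank_euclideanSpace_fin, abs_of_pos (pow_pos hε N)]

theorem IsBary.centroid {s η : Finset (Euc N)} {lam : Euc N → Euc N →ᵃ[ℝ] ℝ} (h : IsBary s lam)
    (hη : η ⊆ s) (hne : η.Nonempty) (v : Euc N) (hv : v ∈ s) :
    lam v (η.centroid ℝ id) = if v ∈ η then (η.card : ℝ)⁻¹ else 0 := by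
  have hw : ∑ i ∈ η, η.centroidWeights ℝ i = 1 :=
    η.sum_centroidWeights_eq_one_of_nonempty ℝ hne
  rw [Finset.centroid_def, Finset.map_affineCombination _ _ _ hw,
    Finset.affineCombination_eq_linear_combination _ _ _ hw]
  have : ∀ i ∈ η, η.centroidWeights ℝ i • (lam v ∘ id) i =
      if i = v then (η.card : ℝ)⁻¹ else 0 := by
    intro i hi
    simp only [Function.comp, id, h.delta v hv i (hη hi), Finset.centroidWeights_apply]
    split_ifs <;> simp
  rw [Finset.sum_congr rfl this, Finset.sum_ite_eq']

theorem solidAngle_eq {σ η : Finset (Euc N)} {lam : Euc N → Euc N →ᵃ[ℝ] ℝ} (h : IsBary σ lam)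
    (hη : η ⊆ σ) (hne : η.Nonempty) :
    solidAngle η σ = (volume (coneBall (fun v => (lam v).linear) (σ \ η))).toReal /
      (volume (Metric.ball (0 : Euc N) 1)).toReal := by
  rw [solidAngle, h.cyl (hne.mono hη)]
  apply Tendsto.limUnder_eq
  apply tendsto_const_nhds.congr'
  set c := η.centroid ℝ id with hc
  have hev : ∀ᶠ y in nhds c, ∀ v ∈ η, 0 < lam v y := by
    rw [Filter.eventually_all_finset]
    intro v hv
    apply (IsBary.continuous lam v).continuousAt.eventually
    apply lt_mem_nhds
    rw [h.centroid hη hne v (hη hv), if_pos hv]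
    have := hne.card_pos
    positivity
  obtain ⟨δ, hδ, hb⟩ := Metric.eventually_nhds_iff.1 hev
  filter_upwards [Ioo_mem_nhdsGT hδ] with ε hε
  have hset : Metric.ball c ε ∩ {y | ∀ v ∈ σ, 0 ≤ lam v y} =
      Metric.ball c ε ∩ {y | ∀ v ∈ σ \ η, 0 ≤ (lam v).linear (y - c)} := by
    have hlin : ∀ y, ∀ v ∈ σ \ η, (lam v).linear (y - c) = lam v y := by
      intro y v hv
      rw [Finset.mem_sdiff] at hv
      rw [← vsub_eq_sub, (lam v).linearMap_vsub, h.centroid hη hne v hv.1, if_neg hv.2]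
      simp
    ext y
    simp only [Set.mem_inter_iff, Set.mem_ofPred_eq]
    refine and_congr_right fun hy => ?_
    constructor
    · intro hy2 v hv
      rw [hlin y v hv]
      exact hy2 v (Finset.mem_sdiff.1 hv).1
    · intro hy2 v hv
      by_cases hvη : v ∈ η
      · exact (hb (lt_trans hy hε.2) v hvη).le
      · have hv' : v ∈ σ \ η := Finset.mem_sdiff.2 ⟨hv, hvη⟩
        rw [← hlin y v hv']
        exact hy2 v hv'
  have hball := volume_cone_scale (fun v => (lam v).linear) ∅ c hε.1
  have hconeb : coneBall (fun v => (lam v).linear) ∅ = Metric.ball (0 : Euc N) 1 := by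
    simp [coneBall]
  rw [hconeb] at hball
  simp only [Finset.notMem_empty, false_imp_iff, implies_true] at hball
  have huniv : Metric.ball c ε ∩ {y | True} = Metric.ball c ε := by simp
  rw [huniv] at hball
  rw [hset, volume_cone_scale _ _ _ hε.1, hball, mul_div_mul_left _ _ (pow_pos hε.1 N).ne']

theorem incl_excl (l : Euc N → Euc N →ₗ[ℝ] ℝ) (R : Finset (Euc N)) :
    ∀ S : Set (Euc N), MeasurableSet S → volume S ≠ ⊤ →
    ∑ T ∈ R.powerset, (-1 : ℝ) ^ T.card * (volume (S ∩ {u | ∀ v ∈ T, 0 ≤ l v u})).toReal =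
      (volume (S ∩ {u | ∀ v ∈ R, l v u < 0})).toReal := by
  have hm : ∀ v, MeasurableSet {u | 0 ≤ l v u} := fun v =>
    measurableSet_le measurable_const (l v).continuous_of_finiteDimensional.measurable
  induction R using Finset.induction_on with
  | empty => intro S _ _; simp
  | insert a R ha ih =>
    intro S hS hfin
    rw [Finset.sum_powerset_insert ha, ih S hS hfin]
    have h2 := ih (S ∩ {u | 0 ≤ l a u}) (hS.inter (hm a))
      (ne_top_of_le_ne_top hfin (measure_mono Set.inter_subset_left))
    have h3 : ∑ T ∈ R.powerset, (-1 : ℝ) ^ (insert a T).card *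
        (volume (S ∩ {u | ∀ v ∈ insert a T, 0 ≤ l v u})).toReal =
        - (volume (S ∩ {u | 0 ≤ l a u} ∩ {u | ∀ v ∈ R, l v u < 0})).toReal := by
      rw [← h2, ← Finset.sum_neg_distrib]
      refine Finset.sum_congr rfl fun T hT => ?_
      have haT : a ∉ T := fun h => ha (Finset.mem_powerset.1 hT h)
      rw [Finset.card_insert_of_notMem haT, pow_succ]
      have : S ∩ {u | ∀ v ∈ insert a T, 0 ≤ l v u} =
          S ∩ {u | 0 ≤ l a u} ∩ {u | ∀ v ∈ T, 0 ≤ l v u} := by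
        ext u; simp [and_assoc]
      rw [this]; ring
    rw [h3]
    have h4 := measure_inter_add_sdiff₀ (μ := volume) (S ∩ {u | ∀ v ∈ R, l v u < 0})
      (hm a).nullMeasurableSet
    have e1 : S ∩ {u | ∀ v ∈ R, l v u < 0} ∩ {u | 0 ≤ l a u} =
        S ∩ {u | 0 ≤ l a u} ∩ {u | ∀ v ∈ R, l v u < 0} := by
      ext u; simp only [Set.mem_inter_iff]; tauto
    have e2 : (S ∩ {u | ∀ v ∈ R, l v u < 0}) \ {u | 0 ≤ l a u} =
        S ∩ {u | ∀ v ∈ insert a R, l v u < 0} := by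
      ext u; simp only [Set.mem_inter_iff, Set.mem_sdiff, Set.mem_ofPred_eq,
        Finset.forall_mem_insert, not_le]; tauto
    rw [e1, e2] at h4
    have f1 : volume (S ∩ {u | 0 ≤ l a u} ∩ {u | ∀ v ∈ R, l v u < 0}) ≠ ⊤ :=
      ne_top_of_le_ne_top hfin (measure_mono (fun u hu => hu.1.1))
    have f2 : volume (S ∩ {u | ∀ v ∈ insert a R, l v u < 0}) ≠ ⊤ :=
      ne_top_of_le_ne_top hfin (measure_mono (fun u hu => hu.1))
    rw [← h4, ENNReal.toReal_add f1 f2]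
    ring

theorem cone_neg (l : Euc N → Euc N →ₗ[ℝ] ℝ) (R : Finset (Euc N)) (hl : ∀ v ∈ R, l v ≠ 0) :
    volume (Metric.ball 0 1 ∩ {u | ∀ v ∈ R, l v u < 0}) = volume (coneBall l R) := by
  have h1 : Metric.ball 0 1 ∩ {u | ∀ v ∈ R, l v u < 0} =
      (fun u => -u) ⁻¹' (Metric.ball 0 1 ∩ {u | ∀ v ∈ R, 0 < l v u}) := by
    ext u; simp
  have h2 : volume ((fun u : Euc N => -u) ⁻¹' (Metric.ball 0 1 ∩ {u | ∀ v ∈ R, 0 < l v u})) =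
      volume (Metric.ball 0 1 ∩ {u | ∀ v ∈ R, 0 < l v u}) :=
    Measure.measure_preimage_neg volume _
  rw [h1, h2]
  apply le_antisymm
  · exact measure_mono fun u hu => ⟨hu.1, fun v hv => (hu.2 v hv).le⟩
  · have hnull : volume (⋃ v ∈ R, (LinearMap.ker (l v) : Set (Euc N))) = 0 := by
      refine (measure_biUnion_null_iff R.countable_toSet).2 ?_
      intro v hv
      apply Measure.addHaar_submodule
      rw [Ne, LinearMap.ker_eq_top]
      exact hl v hv
    calc volume (coneBall l R) ≤ volume ((Metric.ball 0 1 ∩ {u | ∀ v ∈ R, 0 < l v u}) ∪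
          ⋃ v ∈ R, (LinearMap.ker (l v) : Set (Euc N))) := by
            apply measure_mono
            intro u hu
            by_cases hz : ∃ v ∈ R, l v u = 0
            · right
              obtain ⟨v, hv, h0⟩ := hz
              simp only [Set.mem_iUnion]
              exact ⟨v, hv, h0⟩
            · left
              push Not at hz
              exact ⟨hu.1, fun v hv => lt_of_le_of_ne (hu.2 v hv) (hz v hv).symm⟩
      _ ≤ _ := (measure_union_le _ _).trans (by rw [hnull, add_zero])

theorem angle_sum {σ τ : Finset (Euc N)} (hi : AffineIndependent ℝ ((↑) : σ → Euc N))
    (hτ : τ ⊆ σ) (hne : τ.Nonempty) (hodd : Odd (σ.card - τ.card)) :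
    ∑ η ∈ σ.powerset with τ ⊆ η, (-1 : ℝ) ^ (η.card - τ.card) * solidAngle η σ =
      - solidAngle τ σ := by
  obtain ⟨lam, h⟩ := exists_bary σ (hne.mono hτ) hi
  set l : Euc N → Euc N →ₗ[ℝ] ℝ := fun v => (lam v).linear with hl
  have hl0 : ∀ v ∈ σ \ τ, l v ≠ 0 := by
    intro v hv h0
    rw [Finset.mem_sdiff] at hv
    obtain ⟨w, hw⟩ := hne
    have h1 : (lam v).linear (v - w) = lam v v - lam v w := (lam v).linearMap_vsub v w
    rw [show (lam v).linear = 0 from h0, h.delta v hv.1 v hv.1, h.delta v hv.1 w (hτ hw), if_pos rfl,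
      if_neg (by rintro rfl; exact hv.2 hw)] at h1
    simp at h1
  have hie := incl_excl l (σ \ τ) (Metric.ball 0 1) Metric.isOpen_ball.measurableSet
    measure_ball_lt_top.ne
  rw [cone_neg l _ hl0] at hie
  rw [solidAngle_eq h hτ hne, ← hl, ← hie, ← neg_div, ← Finset.sum_neg_distrib, Finset.sum_div]
  refine Finset.sum_nbij' (fun η => σ \ η) (fun T => σ \ T) ?_ ?_ ?_ ?_ ?_
  · intro η hη
    simp only [Finset.mem_filter, Finset.mem_powerset] at hη ⊢
    exact Finset.sdiff_subset_sdiff subset_rfl hη.2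
  · intro T hT
    simp only [Finset.mem_filter, Finset.mem_powerset] at hT ⊢
    refine ⟨Finset.sdiff_subset, fun x hx => Finset.mem_sdiff.2 ⟨hτ hx, fun hxT => ?_⟩⟩
    exact (Finset.mem_sdiff.1 (hT hxT)).2 hx
  · intro η hη
    simp only [Finset.mem_filter, Finset.mem_powerset] at hη
    exact Finset.sdiff_sdiff_eq_self hη.1
  · intro T hT
    rw [Finset.mem_powerset] at hT
    exact Finset.sdiff_sdiff_eq_self (hT.trans Finset.sdiff_subset)
  · intro η hη
    simp only [Finset.mem_filter, Finset.mem_powerset] at hη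
    rw [solidAngle_eq h hη.1 (hne.mono hη.2), ← hl, Finset.card_sdiff_of_subset hη.1]
    have c1 := Finset.card_le_card hη.1
    have c2 := Finset.card_le_card hη.2
    have hsign : (-1 : ℝ) ^ (η.card - τ.card) = - (-1 : ℝ) ^ (σ.card - η.card) := by
      have hp : (-1 : ℝ) ^ (η.card - τ.card) * (-1 : ℝ) ^ (σ.card - η.card) = -1 := by
        rw [← pow_add, show η.card - τ.card + (σ.card - η.card) = σ.card - τ.card by omega]
        exact hodd.neg_one_pow
      rcases neg_one_pow_eq_or ℝ (σ.card - η.card) with h1 | h1 <;> rw [h1] at hp ⊢ <;> linarith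
    rw [hsign, coneBall]
    ring

end Angles

section Assembly

theorem ads_eq_zero {m : ℕ} (hm : Odd m) : ads m = 0 := by
  have : bernoulli (m + 2) = 0 := by
    apply bernoulli_eq_zero_of_odd
    · exact hm.add_even (by decide)
    · have := hm.pos; omega
  simp [ads, this]

theorem finsum_mem_sep {M : Type*} [AddCommMonoid M] (K : SimplicialComplex ℝ (Euc N))
    (hfin : K.faces.Finite) (P : Finset (Euc N) → Prop) [DecidablePred P] (f : Finset (Euc N) → M) :
    ∑ᶠ η ∈ {η | η ∈ K.faces ∧ P η}, f η = ∑ η ∈ hfin.toFinset with P η, f η := by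
  rw [← finsum_mem_coe_finset]
  congr 1
  funext η
  simp

theorem link_sum {n : ℕ} (K : SimplicialComplex ℝ (Euc N)) (hfin : K.faces.Finite)
    (hdim : IsNDim n K) (τ : Finset (Euc N))
    (hl : eulerChar (linkFaces K τ) = 2) :
    ∑ η ∈ hfin.toFinset with τ ⊂ η, (-1 : ℝ) ^ (η.card - τ.card) = -2 := by
  set L := hfin.toFinset.filter (fun ω => Disjoint τ ω ∧ τ ∪ ω ∈ K.faces) with hL
  have hLF : ∀ ω, ω ∈ L ↔ ω ∈ linkFaces K τ := by
    intro ω; simp only [hL, linkFaces, Finset.mem_filter, Set.Finite.mem_toFinset]; rfl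
  have hpos : ∀ ω ∈ L, 1 ≤ ω.card ∧ ω.card ≤ n + 1 := by
    intro ω hω
    have h1 := ((hLF ω).1 hω).1
    exact ⟨Finset.card_pos.2 (SimplicialComplex.nonempty_of_mem_faces h1), hdim.1 _ h1⟩
  have hfc : ∀ k, fcount (linkFaces K τ) k = (L.filter (fun ω => ω.card = k + 1)).card := by
    intro k
    rw [fcount, ← Set.ncard_coe_finset]
    congr 1
    ext ω
    simp [hLF]
  have he : eulerChar (linkFaces K τ) = ∑ ω ∈ L, (-1 : ℤ) ^ (ω.card - 1) := by
    rw [eulerChar, finsum_eq_sum_of_support_subset (s := Finset.range (n + 1))]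
    · rw [← Finset.sum_fiberwise_of_maps_to (s := L) (t := Finset.range (n + 1))
        (g := fun ω => ω.card - 1)]
      · refine Finset.sum_congr rfl fun k _ => ?_
        have : L.filter (fun ω => ω.card - 1 = k) = L.filter (fun ω => ω.card = k + 1) := by
          refine Finset.filter_congr fun ω hω => ?_
          have := hpos ω hω
          omega
        rw [this, hfc, Finset.sum_congr rfl (g := fun _ => (-1 : ℤ) ^ k)]
        · simp [mul_comm]
        · intro ω hω
          rw [(Finset.mem_filter.1 hω).2]; simp
      · intro ω hω
        have := hpos ω hω
        simp only [Finset.mem_range]; omega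
    · intro k hk
      by_contra hk2
      apply hk
      simp only [Finset.coe_range, Set.mem_Iio, not_lt] at hk2
      have : L.filter (fun ω => ω.card = k + 1) = ∅ := by
        refine Finset.filter_eq_empty_iff.2 fun ω hω => ?_
        have := hpos ω hω
        omega
      simp [hfc, this]
  rw [he] at hl
  have hl' : ∑ ω ∈ L, (-1 : ℝ) ^ (ω.card - 1) = 2 := by exact_mod_cast hl
  rw [← hl', ← Finset.sum_neg_distrib]
  symm
  refine Finset.sum_nbij' (fun ω => τ ∪ ω) (fun η => η \ τ) ?_ ?_ ?_ ?_ ?_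
  · intro ω hω
    obtain ⟨h1, h2, h3⟩ := (hLF ω).1 hω
    simp only [Finset.mem_filter, Set.Finite.mem_toFinset]
    refine ⟨h3, Finset.ssubset_iff_subset_ne.2 ⟨Finset.subset_union_left, fun h => ?_⟩⟩
    obtain ⟨x, hx⟩ := SimplicialComplex.nonempty_of_mem_faces h1
    have hxτ : x ∈ τ := by rw [h]; exact Finset.mem_union_right _ hx
    exact Finset.disjoint_left.1 h2 hxτ hx
  · intro η hη
    simp only [Finset.mem_filter, Set.Finite.mem_toFinset] at hη
    rw [hLF]
    have hne : (η \ τ).Nonempty := by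
      rw [Finset.sdiff_nonempty]; exact hη.2.not_subset
    refine ⟨K.down_closed hη.1 Finset.sdiff_subset hne, Finset.disjoint_sdiff, ?_⟩
    rw [Finset.union_sdiff_of_subset hη.2.subset]; exact hη.1
  · intro ω hω
    obtain ⟨h1, h2, h3⟩ := (hLF ω).1 hω
    exact Finset.union_sdiff_cancel_left h2
  · intro η hη
    simp only [Finset.mem_filter, Set.Finite.mem_toFinset] at hη
    exact Finset.union_sdiff_of_subset hη.2.subset
  · intro ω hω
    obtain ⟨h1, h2, h3⟩ := (hLF ω).1 hω
    rw [Finset.card_union_of_disjoint h2, Nat.add_sub_cancel_left]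
    have := (hpos ω hω).1
    obtain ⟨k, hk⟩ : ∃ k, ω.card = k + 1 := ⟨ω.card - 1, by omega⟩
    rw [hk, pow_succ]; simp

theorem asc_inner {n : ℕ} (K : SimplicialComplex ℝ (Euc N)) (hfin : K.faces.Finite)
    (hdim : IsNDim n K) (τ : Finset (Euc N)) (hτ : τ ∈ K.faces) (f : Finset (Euc N) → ℝ) :
    ∑ i ∈ Finset.Icc τ.card n, (-1 : ℝ) ^ (i - (τ.card - 1)) *
          ∑ᶠ η ∈ {η : Finset (Euc N) | η ∈ K.faces ∧ η.card = i + 1 ∧ τ ⊆ η}, f η =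
      ∑ η ∈ hfin.toFinset with τ ⊂ η, (-1 : ℝ) ^ (η.card - τ.card) * f η := by
  have hτ1 := Finset.card_pos.2 (SimplicialComplex.nonempty_of_mem_faces hτ)
  rw [← Finset.sum_fiberwise_of_maps_to (t := Finset.Icc τ.card n)
    (g := fun η : Finset (Euc N) => η.card - 1)]
  · refine Finset.sum_congr rfl fun i hi => ?_
    rw [Finset.mem_Icc] at hi
    rw [finsum_mem_sep K hfin (fun η => η.card = i + 1 ∧ τ ⊆ η), Finset.mul_sum]
    have : (hfin.toFinset.filter (fun η => τ ⊂ η)).filter (fun η => η.card - 1 = i) =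
        hfin.toFinset.filter (fun η => η.card = i + 1 ∧ τ ⊆ η) := by
      rw [Finset.filter_filter]
      refine Finset.filter_congr fun η hη => ?_
      constructor
      · rintro ⟨h1, h2⟩
        have := Finset.card_lt_card h1
        exact ⟨by omega, h1.subset⟩
      · rintro ⟨h1, h2⟩
        refine ⟨Finset.ssubset_iff_subset_ne.2 ⟨h2, ?_⟩, by omega⟩
        rintro rfl
        omega
    rw [this]
    refine Finset.sum_congr rfl fun η hη => ?_
    have h2 := (Finset.mem_filter.1 hη).2.1
    rw [h2, show i - (τ.card - 1) = i + 1 - τ.card by omega]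
  · intro η hη
    simp only [Finset.mem_filter, Set.Finite.mem_toFinset] at hη
    have h1 := Finset.card_lt_card hη.2
    have h2 := hdim.1 η hη.1
    rw [Finset.mem_Icc]; omega

theorem asc_even {n : ℕ} (hodd : Odd n) (K : SimplicialComplex ℝ (Euc N))
    (hfin : K.faces.Finite) (hdim : IsNDim n K) (hrank : ∀ η ∈ K.faces, strRank n K η = 1)
    (τ : Finset (Euc N)) (hτ : τ ∈ K.faces) (hτodd : Odd τ.card)
    (hl : eulerChar (linkFaces K τ) = 2) : asc n K τ = 0 := by
  have hne := SimplicialComplex.nonempty_of_mem_faces hτ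
  set F := hfin.toFinset with hF
  have hdef : ∀ η ∈ K.faces, defect n K η =
      1 - ∑ σ ∈ F with σ.card = n + 1 ∧ η ⊆ σ, solidAngle η σ := by
    intro η hη
    rw [defect, hrank η hη]
    congr 1
    exact finsum_mem_sep K hfin (fun σ => σ.card = n + 1 ∧ η ⊆ σ) (fun σ => solidAngle η σ)
  have hswap : ∑ η ∈ F with τ ⊂ η, (-1 : ℝ) ^ (η.card - τ.card) *
      ∑ σ ∈ F with σ.card = n + 1 ∧ η ⊆ σ, solidAngle η σ =
      ∑ σ ∈ F with σ.card = n + 1 ∧ τ ⊆ σ, (-2) * solidAngle τ σ := by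
    simp_rw [Finset.mul_sum]
    rw [Finset.sum_comm' (t' := F.filter fun σ => σ.card = n + 1 ∧ τ ⊆ σ)
      (s' := fun σ => (σ.powerset.filter fun η => τ ⊆ η).erase τ)]
    · refine Finset.sum_congr rfl fun σ hσ => ?_
      simp only [Finset.mem_filter, hF, Set.Finite.mem_toFinset] at hσ
      obtain ⟨h1, h2, h3⟩ := hσ
      have ha := angle_sum (K.indep h1) h3 hne (by
        rw [h2]
        have := Finset.card_le_card h3
        obtain ⟨a, ha⟩ := hodd
        obtain ⟨b, hb⟩ := hτodd
        exact ⟨a - b, by omega⟩)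
      rw [← Finset.add_sum_erase _ _ (a := τ) (by simp [h3])] at ha
      simp only [Nat.sub_self, pow_zero, one_mul] at ha
      linarith
    · intro η σ
      simp only [Finset.mem_filter, Finset.mem_erase, Finset.mem_powerset, hF,
        Set.Finite.mem_toFinset]
      constructor
      · rintro ⟨⟨h1, h2⟩, h3, h4, h5⟩
        exact ⟨⟨h2.ne', h5, h2.subset⟩, h3, h4, h2.subset.trans h5⟩
      · rintro ⟨⟨h1, h2, h3⟩, h4, h5, h6⟩
        exact ⟨⟨K.down_closed h4 h2 (hne.mono h3), Finset.ssubset_iff_subset_ne.2 ⟨h3, h1.symm⟩⟩,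
          h4, h5, h2⟩
  rw [asc, asc_inner K hfin hdim τ hτ, ← hF]
  have hs : ∑ η ∈ F with τ ⊂ η, (-1 : ℝ) ^ (η.card - τ.card) * defect n K η =
      -2 + 2 * ∑ σ ∈ F with σ.card = n + 1 ∧ τ ⊆ σ, solidAngle τ σ := by
    have : ∀ η ∈ F.filter (fun η => τ ⊂ η), (-1 : ℝ) ^ (η.card - τ.card) * defect n K η =
        (-1 : ℝ) ^ (η.card - τ.card) - (-1 : ℝ) ^ (η.card - τ.card) *
          ∑ σ ∈ F with σ.card = n + 1 ∧ η ⊆ σ, solidAngle η σ := by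
      intro η hη
      simp only [Finset.mem_filter, hF, Set.Finite.mem_toFinset] at hη
      rw [hdef η hη.1]; ring
    rw [Finset.sum_congr rfl this, Finset.sum_sub_distrib, hswap, ← Finset.mul_sum,
      link_sum K hfin hdim τ hl]
    ring
  rw [hs, hdef τ hτ]
  ring

end Assembly

/-- If `K` is a finite `n`-dimensional simplicial complex with `n` odd, `n ≥ 3`,
such that `χ(link(η, K)) = 2` for every even-dimensional simplex `η` of `K` of
dimension `i ≤ n - 1`, then the ascending stratified curvature vanishes at every
simplex of `K`. -/
theorem asc_eq_zero_of_links {N n : ℕ} (hn : 3 ≤ n) (hodd : Odd n)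
    (K : SimplicialComplex ℝ (Euc N)) (hfin : K.faces.Finite) (hdim : IsNDim n K)
    (hlink : ∀ i : ℕ, Even i → i ≤ n - 1 → ∀ η ∈ K.faces, η.card = i + 1 →
      eulerChar (linkFaces K η) = 2) :
    ∀ τ ∈ K.faces, asc n K τ = 0 := by
  intro τ hτ
  have hτ1 := Finset.card_pos.2 (SimplicialComplex.nonempty_of_mem_faces hτ)
  have hτn := hdim.1 τ hτ
  rcases Nat.even_or_odd (τ.card - 1) with he | ho
  · have hoddτ : Odd τ.card := by
      obtain ⟨k, hk⟩ := he
      exact ⟨k, by omega⟩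
    have hle : τ.card - 1 ≤ n - 1 := by
      obtain ⟨k, hk⟩ := he
      obtain ⟨m, hm⟩ := hodd
      omega
    refine asc_even hodd K hfin hdim ?_ τ hτ hoddτ (hlink (τ.card - 1) he hle τ hτ (by omega))
    refine strRank_eq_one (by omega) K hfin hdim fun s hs hsc => ?_
    refine hlink (n - 1) ?_ le_rfl s hs (by omega)
    obtain ⟨m, hm⟩ := hodd
    exact ⟨m, by omega⟩
  · simp [asc, ads_eq_zero ho]

end AngleDefectPaper
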